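/- arXiv:cs/0509032 — 6 statements merged into one kernel-verified Lean document; each statement's English description precedes it below -/
import Mathlib

section
/- Let k ≥ 2 be an integer and let α > 1/k, r > 0 and 0 < p ≤ (k-1)/k be real constants. For a random instance P drawn from RB(k,n,α,r,p), the probability that P is satisfiable tends, as n → ∞, to 1 if r < r_cr and to 0 if r > r_cr, where r_cr = -α/ln(1-p). -/
namespace RB

/-- A (raw) constraint over `n` variables with common domain `Fin d`:
a scope (set of variables) together with a set of forbidden tuples,
i.e. forbidden functions from the scope to the domain. -/
abbrev Constraint (n d : ℕ) : Type := Σ s : Finset (Fin n), Finset (↥s → Fin d)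

/-- A constraint of model RB: scope of exactly `k` variables and exactly `q` forbidden tuples. -/
abbrev ValidConstraint (k n d q : ℕ) : Type :=
  {c : Constraint n d // c.1.card = k ∧ c.2.card = q}

/-- An instance of model RB: a sequence of `m` constraints (chosen with repetition). -/
abbrev Instance (k n d q m : ℕ) : Type := Fin m → ValidConstraint k n d q

/-- An assignment satisfies a constraint iff the tuple it induces on the scope is not forbidden. -/
def satisfies {n d : ℕ} (a : Fin n → Fin d) (c : Constraint n d) : Prop :=
  (fun i : ↥c.1 => a i.1) ∉ c.2

/-- An assignment satisfies an instance iff it satisfies all its constraints. -/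
def satInstance {k n d q m : ℕ} (a : Fin n → Fin d) (P : Instance k n d q m) : Prop :=
  ∀ i : Fin m, satisfies a (P i).1

open scoped Classical in
/-- The probability (uniform over instances, i.e. constraints chosen independently,
uniformly and with repetition) that a random instance is satisfiable. -/
noncomputable def prSat (k n d q m : ℕ) : ℝ :=
  ((Finset.univ.filter fun P : Instance k n d q m =>
      ∃ a : Fin n → Fin d, satInstance a P).card : ℝ)
    / (Fintype.card (Instance k n d q m))

/-- Domain size `d = ⌈n^α⌉`. -/
noncomputable def dOf (α : ℝ) (n : ℕ) : ℕ := ⌈(n : ℝ) ^ α⌉₊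

/-- Number of constraints `m = ⌈r · n · ln n⌉`. -/
noncomputable def mOf (r : ℝ) (n : ℕ) : ℕ := ⌈r * n * Real.log n⌉₊

/-- Number of forbidden tuples `q = ⌈p · d^k⌉`. -/
noncomputable def qOf (p : ℝ) (k d : ℕ) : ℕ := ⌈p * (d : ℝ) ^ k⌉₊

/-- Probability that a random instance of `RB(k,n,α,r,p)` is satisfiable. -/
noncomputable def prSatRB (k : ℕ) (α r p : ℝ) (n : ℕ) : ℝ :=
  prSat k n (dOf α n) (qOf p k (dOf α n)) (mOf r n)

end RB

open Filter Topology

namespace RB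
open Finset

lemma card_filter_valid (k n d q : ℕ) (Q : Constraint n d → Prop) [DecidablePred Q] :
    (univ.filter fun c : ValidConstraint k n d q => Q c.1).card =
      ∑ s ∈ powersetCard k (univ : Finset (Fin n)),
        ((powersetCard q (univ : Finset (↥s → Fin d))).filter fun F => Q ⟨s, F⟩).card := by
  rw [← Finset.card_sigma]
  refine Finset.card_bij (fun c _ => c.1) ?_ ?_ ?_
  · rintro ⟨⟨s, F⟩, h1, h2⟩ hc
    simp at hc h1 h2
    simp [h1, h2, hc]
  · intro a _ b _ h
    exact Subtype.ext h
  · rintro ⟨s, F⟩ h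
    simp at h
    exact ⟨⟨⟨s, F⟩, h.1, h.2.1⟩, by simpa using h.2.2, rfl⟩

lemma card_avoid {T : Type*} [Fintype T] (q : ℕ) (A : Finset T)
    (R : Finset T → Prop) [DecidablePred R] (hR : ∀ F, R F ↔ Disjoint A F) :
    ((powersetCard q (univ : Finset T)).filter R).card =
      (Fintype.card T - A.card).choose q := by
  classical
  rw [← Finset.card_compl, ← Finset.card_powersetCard]
  congr 1
  ext F
  simp only [mem_filter, mem_powersetCard, subset_univ, true_and, hR]
  rw [Finset.subset_compl_iff_disjoint_left]
  tauto

lemma choose1 (D q : ℕ) (hq : q < D) :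
    ((D - 1).choose q : ℝ) = (1 - (q : ℝ) / D) * (D.choose q) := by
  obtain ⟨E, rfl⟩ : ∃ E, D = E + 1 := ⟨D - 1, by omega⟩
  have h := Nat.choose_mul_succ_eq E q
  have h' : (E.choose q : ℝ) * ((E : ℝ) + 1) = (E + 1).choose q * ((E : ℝ) + 1 - q) := by
    have := congrArg (Nat.cast (R := ℝ)) h
    rw [Nat.cast_mul, Nat.cast_mul, Nat.cast_sub (by omega)] at this
    push_cast at this
    exact this
  have : (E : ℝ) + 1 ≠ 0 := by positivity
  simp only [Nat.add_sub_cancel]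
  push_cast
  field_simp
  linarith

lemma choose2 (D q : ℕ) (hq : q < D) :
    ((D - 2).choose q : ℝ) ≤ (1 - (q : ℝ) / D) ^ 2 * (D.choose q) := by
  by_cases h : q < D - 1
  · have h1 := choose1 (D - 1) q h
    have h2 := choose1 D q hq
    rw [show D - 2 = D - 1 - 1 by omega, h1, h2, sq, mul_assoc]
    have hD : (0 : ℝ) < ((D - 1 : ℕ) : ℝ) := by
      exact_mod_cast (by omega : 0 < D - 1)
    have hD' : (q : ℝ) / D ≤ q / ((D - 1 : ℕ) : ℝ) := by
      apply div_le_div_of_nonneg_left (by positivity) hD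
      exact_mod_cast (by omega)
    have : (q : ℝ) / D ≤ 1 := by
      rw [div_le_one (by exact_mod_cast (by omega : 0 < D))]
      exact_mod_cast hq.le
    apply mul_le_mul_of_nonneg_right (by linarith)
    apply mul_nonneg (by linarith) (by positivity)
  · by_cases h0 : q = 0
    · subst h0; simp
    · rw [Nat.choose_eq_zero_of_lt (by omega)]
      simp; positivity

/-- number of constraints -/
lemma card_valid (k n d q : ℕ) :
    Fintype.card (ValidConstraint k n d q) = n.choose k * (d ^ k).choose q := by
  classical
  have := card_filter_valid k n d q (fun _ => True)
  simp only [filter_true, card_powersetCard] at this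
  rw [← Finset.card_univ, this, Finset.sum_congr rfl (g := fun _ => (d^k).choose q)]
  · simp
  · intro s hs
    rw [mem_powersetCard] at hs
    simp [hs.2]

open scoped Classical in
lemma card_sat1 (k n d q : ℕ) (hq : q < d ^ k) (a : Fin n → Fin d) :
    ((univ.filter fun c : ValidConstraint k n d q => satisfies a c.1).card : ℝ) =
      (1 - (q : ℝ) / (d ^ k : ℕ)) * Fintype.card (ValidConstraint k n d q) := by
  rw [card_filter_valid k n d q (fun c => satisfies a c), card_valid,
    Finset.sum_congr rfl (g := fun _ => (d^k - 1).choose q)]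
  · simp only [sum_const, card_powersetCard, card_univ, Fintype.card_fin, smul_eq_mul]
    rw [Nat.cast_mul, choose1 _ _ hq, Nat.cast_mul]; ring
  · intro s hs
    rw [mem_powersetCard] at hs
    rw [card_avoid (T := ↥s → Fin d) q {fun i => a i.1} _ (by
      intro F; simp only [disjoint_singleton_left]; rfl)]
    simp [hs.2]

/-- agreement set -/
def agree {n d : ℕ} (a b : Fin n → Fin d) : Finset (Fin n) := univ.filter fun i => a i = b i

lemma choose_ratio (k n s : ℕ) (hs : s ≤ n) (hn : 0 < n) :
    (s.choose k : ℝ) ≤ ((s : ℝ) / n) ^ k * n.choose k := by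
  have key : s.descFactorial k * n ^ k ≤ s ^ k * n.descFactorial k := by
    induction k with
    | zero => simp
    | succ k ih =>
      rw [Nat.descFactorial_succ, Nat.descFactorial_succ, pow_succ, pow_succ]
      have : (s - k) * n ≤ s * (n - k) := by
        rw [Nat.sub_mul, Nat.mul_sub]
        have : s * k ≤ k * n := by nlinarith
        omega
      calc (s - k) * s.descFactorial k * (n ^ k * n) = (s.descFactorial k * n ^ k) * ((s - k) * n) := by ring
        _ ≤ (s ^ k * n.descFactorial k) * (s * (n - k)) := Nat.mul_le_mul ih this
        _ = _ := by ring
  rw [Nat.descFactorial_eq_factorial_mul_choose, Nat.descFactorial_eq_factorial_mul_choose] at key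
  have k2 : s.choose k * n ^ k ≤ s ^ k * n.choose k := by
    have := Nat.factorial_pos k
    apply Nat.le_of_mul_le_mul_left _ this
    linarith
  have k3 : (s.choose k : ℝ) * n ^ k ≤ s ^ k * n.choose k := by exact_mod_cast k2
  have : (0 : ℝ) < n := by exact_mod_cast hn
  rw [div_pow, div_mul_eq_mul_div, le_div_iff₀ (by positivity)]
  exact k3

open scoped Classical in
lemma card_sat2 (k n d q : ℕ) (hn : 0 < n) (hq : q < d ^ k) (a b : Fin n → Fin d) :
    ((univ.filter fun c : ValidConstraint k n d q => satisfies a c.1 ∧ satisfies b c.1).card : ℝ) ≤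
      (1 - (q : ℝ) / (d ^ k : ℕ)) ^ 2 *
        (1 + ((q : ℝ) / (d ^ k : ℕ)) / (1 - (q : ℝ) / (d ^ k : ℕ)) * (((agree a b).card : ℝ) / n) ^ k)
        * Fintype.card (ValidConstraint k n d q) := by
  have hcf := card_filter_valid k n d q (fun c => satisfies a c ∧ satisfies b c)
  rw [hcf, card_valid]
  set p : ℝ := (q : ℝ) / (d ^ k : ℕ) with hp
  have hD : (0 : ℝ) < (d ^ k : ℕ) := by exact_mod_cast (by omega : 0 < d ^ k)
  have hp1 : p < 1 := by
    rw [hp, div_lt_one hD]; exact_mod_cast hq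
  have hp0 : 0 ≤ p := by positivity
  set W : ℝ := ((d ^ k).choose q : ℝ) with hW
  have hWp : 0 ≤ W := by positivity
  have step : ∀ s ∈ powersetCard k (univ : Finset (Fin n)),
      ((((powersetCard q (univ : Finset (↥s → Fin d))).filter
        fun F => satisfies a ⟨s, F⟩ ∧ satisfies b ⟨s, F⟩).card : ℕ) : ℝ) ≤
        (1 - p) ^ 2 * W + (if s ⊆ agree a b then p * (1 - p) * W else 0) := by
    intro s hs
    rw [mem_powersetCard] at hs
    rw [card_avoid (T := ↥s → Fin d) q {fun i => a i.1, fun i => b i.1} _ (by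
      intro F; simp only [disjoint_insert_left, disjoint_singleton_left]; rfl)]
    have hc : Fintype.card (↥s → Fin d) = d ^ k := by simp [hs.2]
    rw [hc]
    split_ifs with hsub
    · have : (fun i : ↥s => a i.1) = fun i => b i.1 := by
        funext i
        have := hsub i.2
        simpa [agree] using this
      rw [this, Finset.pair_eq_singleton, card_singleton, choose1 _ _ hq]
      apply le_of_eq; ring
    · have : (fun i : ↥s => a i.1) ≠ fun i => b i.1 := by
        intro he
        apply hsub
        intro i hi
        have := congrFun he ⟨i, hi⟩
        simpa [agree] using this
      rw [card_pair this, add_zero]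
      exact choose2 _ _ hq
  push_cast
  refine (Finset.sum_le_sum step).trans ?_
  rw [Finset.sum_add_distrib, ← Finset.sum_filter, sum_const, sum_const]
  have hf : (powersetCard k (univ : Finset (Fin n))).filter (fun s => s ⊆ agree a b) =
      powersetCard k (agree a b) := by
    ext s; simp [mem_powersetCard, and_comm]
  rw [hf, card_powersetCard, card_powersetCard, card_univ, Fintype.card_fin, nsmul_eq_mul, nsmul_eq_mul]
  have hr := choose_ratio k n (agree a b).card ((card_le_univ _).trans (by simp)) hn
  have hpp : 0 ≤ p * (1 - p) * W := by
    apply mul_nonneg (mul_nonneg hp0 (by linarith)) hWp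
  have h2 := mul_le_mul_of_nonneg_right hr hpp
  have h1p : (1 - p) ≠ 0 := by linarith
  calc _ ≤ (n.choose k : ℝ) * ((1 - p) ^ 2 * W) +
        ((((agree a b).card : ℝ) / n) ^ k * n.choose k) * (p * (1 - p) * W) := by linarith
    _ = _ := by
      simp only [← hW, Nat.cast_pow] at *
      field_simp

lemma card_inst {V : Type*} [Fintype V] (m : ℕ) (Q : V → Prop) [DecidablePred Q]
    (R : (Fin m → V) → Prop) [DecidablePred R] (hR : ∀ P, R P ↔ ∀ i, Q (P i)) :
    (univ.filter R).card = (univ.filter Q).card ^ m := by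
  classical
  have : (univ.filter R) =
      Fintype.piFinset (fun _ : Fin m => univ.filter Q) := by
    ext P; simp [Fintype.mem_piFinset, hR]
  rw [this, Fintype.card_piFinset]; simp

lemma sum_agree (n d : ℕ) (a : Fin n → Fin d) (f : ℕ → ℝ) :
    ∑ b : Fin n → Fin d, f (agree a b).card =
      ∑ s ∈ range (n + 1), (n.choose s : ℝ) * ((d - 1 : ℕ) : ℝ) ^ (n - s) * f s := by
  classical
  have h1 : ∀ S : Finset (Fin n),
      (univ.filter fun b : Fin n → Fin d => agree a b = S).card = (d - 1) ^ (n - S.card) := by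
    intro S
    have : (univ.filter fun b : Fin n → Fin d => agree a b = S) =
        Fintype.piFinset (fun i => if i ∈ S then {a i} else {a i}ᶜ) := by
      ext b
      simp only [mem_filter, mem_univ, true_and, Fintype.mem_piFinset]
      constructor
      · rintro rfl i
        by_cases h : a i = b i
        · simp [agree, h]
        · simp [agree, h]; exact fun h' => h h'.symm
      · intro h
        ext i
        have := h i
        by_cases hi : i ∈ S
        · simp [hi] at this; simp [agree, hi, this]
        · simp [hi] at this; simp [agree, hi]; exact fun h' => this h'.symm
    rw [this, Fintype.card_piFinset]
    have : ∀ i, (if i ∈ S then ({a i} : Finset (Fin d)) else {a i}ᶜ).card = if i ∈ S then 1 else d - 1 := by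
      intro i; split_ifs <;> simp [card_compl]
    simp only [this]
    rw [Finset.prod_ite]
    simp only [prod_const_one, one_mul, prod_const]
    congr 1
    rw [Finset.filter_not, ← Finset.compl_eq_univ_sdiff, card_compl]
    simp
  rw [← Finset.sum_fiberwise_of_maps_to (s := univ) (t := (univ : Finset (Fin n)).powerset)
    (g := fun b => agree a b) (by simp)]
  have h2 : ∀ S ∈ (univ : Finset (Fin n)).powerset,
      ∑ b ∈ univ.filter (fun b : Fin n → Fin d => agree a b = S), f (agree a b).card =
      (fun s => ((d - 1 : ℕ) : ℝ) ^ (n - s) * f s) S.card := by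
    intro S _
    rw [Finset.sum_congr rfl (g := fun _ => f S.card)]
    · rw [sum_const, h1]; simp
    · intro b hb
      simp at hb
      rw [hb]
  rw [Finset.sum_congr rfl h2, Finset.sum_powerset_apply_card (fun s => ((d - 1 : ℕ) : ℝ) ^ (n - s) * f s)]
  simp [mul_assoc]

lemma prSat_first (k n d q m : ℕ) (hkn : k ≤ n) (hq : q < d ^ k) :
    prSat k n d q m ≤ (d : ℝ) ^ n * (1 - (q : ℝ) / (d ^ k : ℕ)) ^ m := by
  classical
  unfold prSat
  set V := ValidConstraint k n d q
  have hV : 0 < Fintype.card V := by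
    rw [card_valid]; exact Nat.mul_pos (Nat.choose_pos hkn) (Nat.choose_pos hq.le)
  have hVR : (0 : ℝ) < Fintype.card V := by exact_mod_cast hV
  have hI : Fintype.card (Instance k n d q m) = Fintype.card V ^ m := by simp [V]
  rw [hI]
  push_cast
  rw [div_le_iff₀ (by positivity)]
  have h : (univ.filter fun P : Instance k n d q m => ∃ a : Fin n → Fin d, satInstance a P).card ≤
      ∑ a : Fin n → Fin d, (univ.filter fun P : Instance k n d q m => satInstance a P).card := by
    refine le_trans (card_le_card ?_) card_biUnion_le
    intro P; simp
  have h1 : ∀ a : Fin n → Fin d,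
      (((univ.filter fun P : Instance k n d q m => satInstance a P).card : ℕ) : ℝ) =
      ((1 - (q : ℝ) / (d ^ k : ℕ)) * Fintype.card V) ^ m := by
    intro a
    rw [← card_sat1 k n d q hq a, ← Nat.cast_pow,
      card_inst m (fun c : V => satisfies a c.1) (fun P => satInstance a P) (fun P => Iff.rfl)]
  have h' : (((univ.filter fun P : Instance k n d q m => ∃ a : Fin n → Fin d, satInstance a P).card : ℕ) : ℝ) ≤
      ∑ a : Fin n → Fin d, (((univ.filter fun P : Instance k n d q m => satInstance a P).card : ℕ) : ℝ) := by
    exact_mod_cast h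
  refine le_trans (le_of_eq ?_) (h'.trans (le_of_eq ?_))
  · congr!
  · simp only [h1, sum_const, card_univ]
    simp [mul_pow]; ring

lemma prSat_nonneg (k n d q m : ℕ) : 0 ≤ prSat k n d q m := by
  unfold prSat; positivity

lemma prSat_le_one (k n d q m : ℕ) : prSat k n d q m ≤ 1 := by
  unfold prSat
  apply div_le_one_of_le₀ _ (by positivity)
  exact_mod_cast card_le_univ _

lemma prSat_second (k n d q m : ℕ) (hn : 0 < n) (hkn : k ≤ n) (hd : 0 < d) (hq : q < d ^ k) :
    1 ≤ prSat k n d q m * ∑ s ∈ range (n + 1), (n.choose s : ℝ) * (1 / (d : ℝ)) ^ s *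
      (1 - 1 / (d : ℝ)) ^ (n - s) *
      (1 + ((q : ℝ) / (d ^ k : ℕ)) / (1 - (q : ℝ) / (d ^ k : ℕ)) * ((s : ℝ) / n) ^ k) ^ m := by
  classical
  set V := ValidConstraint k n d q
  have hV : 0 < Fintype.card V := by
    rw [card_valid]; exact Nat.mul_pos (Nat.choose_pos hkn) (Nat.choose_pos hq.le)
  have hVR : (0 : ℝ) < Fintype.card V := by exact_mod_cast hV
  have hdR : (0 : ℝ) < d := by exact_mod_cast hd
  set p : ℝ := (q : ℝ) / (d ^ k : ℕ) with hp
  have hD : (0 : ℝ) < (d ^ k : ℕ) := by exact_mod_cast (by omega : 0 < d ^ k)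
  have hp1 : p < 1 := by
    rw [hp, div_lt_one hD]; exact_mod_cast hq
  have hp0 : 0 ≤ p := by positivity
  let X : (Fin n → Fin d) → Instance k n d q m → ℝ := fun a P => if satInstance a P then 1 else 0
  let N : Instance k n d q m → ℝ := fun P => ∑ a, X a P
  set G := univ.filter fun P : Instance k n d q m => ∃ a : Fin n → Fin d, satInstance a P with hG
  have hN1 : ∑ P ∈ G, N P = ∑ P, N P := by
    apply Finset.sum_subset (subset_univ _)
    intro P _ hP
    simp only [hG, mem_filter, mem_univ, true_and, not_exists] at hP
    simp [N, X, hP]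
  have h1 : ∑ P, N P = (d : ℝ) ^ n * ((1 - p) * Fintype.card V) ^ m := by
    simp only [N]
    rw [Finset.sum_comm]
    have : ∀ a : Fin n → Fin d, ∑ P, X a P = ((1 - p) * Fintype.card V) ^ m := by
      intro a
      simp only [X]
      rw [Finset.sum_boole, ← card_sat1 k n d q hq a, ← Nat.cast_pow,
        card_inst m (fun c : V => satisfies a c.1) (fun P => satInstance a P) (fun P => Iff.rfl)]
    simp [this]
  let F : ℕ → ℝ := fun s => (1 + p / (1 - p) * ((s : ℝ) / n) ^ k) ^ m
  set S := ∑ s ∈ range (n + 1), (n.choose s : ℝ) * (1 / (d : ℝ)) ^ s *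
      (1 - 1 / (d : ℝ)) ^ (n - s) * (1 + p / (1 - p) * ((s : ℝ) / n) ^ k) ^ m with hS
  have hSS : ∀ a : Fin n → Fin d, ∑ b : Fin n → Fin d, F (agree a b).card = (d : ℝ) ^ n * S := by
    intro a
    rw [sum_agree, hS, Finset.mul_sum]
    apply Finset.sum_congr rfl
    intro s hs
    rw [mem_range] at hs
    have e : (d : ℝ) ^ n = d ^ s * d ^ (n - s) := by rw [← pow_add]; congr 1; omega
    rw [Nat.cast_sub hd, e]
    have e2 : ((d : ℝ) - 1) ^ (n - s) = d ^ (n - s) * (1 - 1 / (d : ℝ)) ^ (n - s) := by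
      rw [← mul_pow]; congr 1; field_simp
    have e3 : (d : ℝ) ^ s * (1 / (d : ℝ)) ^ s = 1 := by
      rw [← mul_pow]; simp [hdR.ne']
    simp only [Nat.cast_one, e2, F]
    linear_combination (-(n.choose s : ℝ) * (d : ℝ) ^ (n - s) * (1 - 1 / (d : ℝ)) ^ (n - s) *
      (1 + p / (1 - p) * ((s : ℝ) / n) ^ k) ^ m) * e3
  have h2 : ∑ P, N P ^ 2 ≤ (d : ℝ) ^ n * ((d : ℝ) ^ n * S) * ((1 - p) ^ 2 * Fintype.card V) ^ m := by
    have e : ∀ P, N P ^ 2 = ∑ a, ∑ b, X a P * X b P := by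
      intro P
      simp only [N]
      rw [sq, Finset.sum_mul_sum]
    simp only [e]
    rw [Finset.sum_comm]
    have : ∀ a : Fin n → Fin d, ∑ P, ∑ b, X a P * X b P ≤
        ((d : ℝ) ^ n * S) * ((1 - p) ^ 2 * Fintype.card V) ^ m := by
      intro a
      rw [Finset.sum_comm, ← hSS a, Finset.sum_mul]
      apply Finset.sum_le_sum
      intro b _
      have : ∑ P, X a P * X b P = ((univ.filter fun c : V => satisfies a c.1 ∧ satisfies b c.1).card : ℝ) ^ m := by
        rw [← Nat.cast_pow, ← card_inst m (fun c : V => satisfies a c.1 ∧ satisfies b c.1)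
          (fun P => satInstance a P ∧ satInstance b P)
          (fun P => by simp only [satInstance, forall_and]), ← Finset.sum_boole]
        apply Finset.sum_congr rfl
        intro P _
        simp only [X]
        by_cases ha : satInstance a P <;> by_cases hb : satInstance b P <;> simp [ha, hb]
      rw [this]
      refine (pow_le_pow_left₀ (by positivity) (card_sat2 k n d q hn hq a b) m).trans (le_of_eq ?_)
      simp only [F, ← mul_pow]
      congr 1
      simp only [hp, V]
      ring
    refine (Finset.sum_le_sum (fun a _ => this a)).trans (le_of_eq ?_)
    simp [mul_assoc]
  have hCS : (∑ P ∈ G, N P) ^ 2 ≤ G.card * ∑ P ∈ G, N P ^ 2 := sq_sum_le_card_mul_sum_sq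
  have hsub : ∑ P ∈ G, N P ^ 2 ≤ ∑ P, N P ^ 2 :=
    Finset.sum_le_sum_of_subset_of_nonneg (subset_univ _) (fun _ _ _ => sq_nonneg _)
  have hpr : prSat k n d q m = G.card / (Fintype.card V : ℝ) ^ m := by
    unfold prSat
    have hI : Fintype.card (Instance k n d q m) = Fintype.card V ^ m := by simp [V]
    rw [hI]; push_cast
    congr!
  rw [hpr]
  rw [hN1, h1] at hCS
  have hfin : ((d : ℝ) ^ n * ((1 - p) * Fintype.card V) ^ m) ^ 2 ≤
      G.card * ((d : ℝ) ^ n * ((d : ℝ) ^ n * S) * ((1 - p) ^ 2 * Fintype.card V) ^ m) :=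
    hCS.trans (mul_le_mul_of_nonneg_left (hsub.trans h2) (by positivity))
  have h1p : 0 < 1 - p := by linarith
  set v : ℝ := (Fintype.card V : ℝ)
  have hK : 0 < ((d : ℝ) ^ n) ^ 2 * ((1 - p) ^ m) ^ 2 * v ^ m := by positivity
  rw [div_mul_eq_mul_div, le_div_iff₀ (by positivity), one_mul]
  refine le_of_mul_le_mul_left ?_ hK
  calc _ = ((d : ℝ) ^ n * ((1 - p) * v) ^ m) ^ 2 := by rw [mul_pow (1 - p)]; ring
    _ ≤ _ := hfin
    _ = _ := by rw [mul_pow ((1 - p) ^ 2), ← pow_mul, ← pow_mul (1-p), mul_comm 2 m]; ring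

end RB

namespace RB
open Finset

lemma log_ineq1 (k y : ℝ) (hy : 1 ≤ y) (hyk : y ≤ k) : Real.log y ≤ k * (1 - 1 / y) := by
  rcases eq_or_lt_of_le hy with h | h
  · subst h; simp
  have hk : 1 < k := lt_of_lt_of_le h hyk
  have hlk : 0 < Real.log k := Real.log_pos hk
  have hly : 0 < Real.log y := Real.log_pos h
  set θ := Real.log y / Real.log k with hθ
  have hθ0 : 0 ≤ θ := by positivity
  have hθ1 : θ ≤ 1 := by
    rw [hθ, div_le_one hlk]; exact Real.log_le_log (by linarith) hyk
  have hc := convexOn_exp.2 (Set.mem_univ (0 : ℝ)) (Set.mem_univ (- Real.log k))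
    (by linarith : 0 ≤ 1 - θ) hθ0 (by ring)
  simp only [smul_eq_mul, mul_zero, zero_add, Real.exp_zero, mul_one] at hc
  have e1 : θ * -Real.log k = - Real.log y := by rw [hθ]; field_simp
  rw [e1, Real.exp_neg, Real.exp_neg, Real.exp_log (by linarith), Real.exp_log (by linarith)] at hc
  have e2 : Real.log y = θ * Real.log k := by rw [hθ]; field_simp
  have e3 : Real.log k ≤ k - 1 := Real.log_le_sub_one_of_pos (by linarith)
  have e4 : k * y⁻¹ ≤ k * ((1 - θ) + θ * k⁻¹) := mul_le_mul_of_nonneg_left hc (by linarith)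
  have e5 : k * ((1 - θ) + θ * k⁻¹) = k - θ * (k - 1) := by field_simp; ring
  have e6 := mul_le_mul_of_nonneg_left e3 hθ0
  rw [one_div]
  nlinarith

lemma log_ineq (k : ℕ) (hk : 1 ≤ k) (c : ℝ) (hc : 0 ≤ c) (hck : 1 + c ≤ k) (x : ℝ) (hx0 : 0 < x)
    (hx1 : x ≤ 1) : Real.log (1 + c * x ^ k) ≤ x * Real.log (1 + c) := by
  have hpos : ∀ t : ℝ, 0 < t → 0 < 1 + c * t ^ k := fun t ht => by positivity
  have hd : ∀ t : ℝ, 0 < t → HasDerivAt (fun x : ℝ => Real.log (1 + c * x ^ k) / x)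
      (((c * (k * t ^ (k - 1))) / (1 + c * t ^ k) * t - Real.log (1 + c * t ^ k) * 1) / t ^ 2) t := by
    intro t ht
    have h1 : HasDerivAt (fun x : ℝ => 1 + c * x ^ k) (c * (k * t ^ (k - 1))) t :=
      ((hasDerivAt_pow k t).const_mul c).const_add 1
    exact (h1.log (hpos t ht).ne').div (hasDerivAt_id t) ht.ne'
  have hmono : MonotoneOn (fun x : ℝ => Real.log (1 + c * x ^ k) / x) (Set.Ioc 0 1) := by
    apply monotoneOn_of_deriv_nonneg (convex_Ioc 0 1)
    · intro t ht; exact (hd t ht.1).continuousAt.continuousWithinAt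
    · intro t ht; rw [interior_Ioc] at ht
      exact (hd t ht.1).differentiableAt.differentiableWithinAt
    · intro t ht; rw [interior_Ioc] at ht
      rw [(hd t ht.1).deriv]
      apply div_nonneg _ (sq_nonneg _)
      have ht0 := ht.1
      have hp := hpos t ht0
      have htk : t ^ k ≤ 1 := pow_le_one₀ ht0.le ht.2.le
      have h := log_ineq1 k (1 + c * t ^ k) (by have := hp; nlinarith [mul_nonneg hc (pow_nonneg ht0.le k)])
        (by nlinarith)
      have e : (c * (k * t ^ (k - 1))) / (1 + c * t ^ k) * t = k * (1 - 1 / (1 + c * t ^ k)) := by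
        have : t ^ k = t ^ (k - 1) * t := by rw [← pow_succ]; congr 1; omega
        field_simp
        rw [this]; ring
      rw [e]; linarith
  have := hmono ⟨hx0, hx1⟩ ⟨one_pos, le_refl 1⟩ hx1
  simp only [one_pow, mul_one, div_one] at this
  rw [div_le_iff₀ hx0] at this
  linarith

lemma choose_le_exp (n s : ℕ) (hs : 0 < s) :
    (n.choose s : ℝ) ≤ (Real.exp 1 * ((n : ℝ) / s)) ^ s := by
  have h1 : (n.choose s : ℝ) ≤ (n : ℝ) ^ s / s.factorial := Nat.choose_le_pow_div s n
  have h2 := Real.pow_div_factorial_le_exp (s : ℝ) (by positivity) s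
  have hsR : (0 : ℝ) < s := by exact_mod_cast hs
  refine h1.trans ?_
  rw [mul_pow, ← Real.exp_nat_mul, mul_one, div_pow]
  have h3 : (n : ℝ) ^ s / s.factorial = ((s : ℝ) ^ s / s.factorial) * ((n : ℝ) ^ s / s ^ s) := by
    field_simp
  rw [h3]
  exact mul_le_mul_of_nonneg_right h2 (by positivity)

lemma big_term (n d m k s : ℕ) (α r C lam mu γ : ℝ) (hn : 1 ≤ n) (hs : 0 < s)
    (hd : (n : ℝ) ^ α ≤ d) (hm : (m : ℝ) ≤ r * n * Real.log n) (hC : 0 ≤ C)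
    (hL : r * Real.log (1 + C * ((s : ℝ) / n) ^ k) ≤ lam * ((s : ℝ) / n))
    (hx : (n : ℝ) / s ≤ (n : ℝ) ^ mu) (hg : mu - α + lam ≤ -γ) :
    (n.choose s : ℝ) * (1 / (d : ℝ)) ^ s * (1 + C * ((s : ℝ) / n) ^ k) ^ m ≤
      (Real.exp 1 * (n : ℝ) ^ (-γ)) ^ s := by
  have hnR : (1 : ℝ) ≤ n := by exact_mod_cast hn
  have hn0 : (0 : ℝ) < n := by linarith
  have hlog : 0 ≤ Real.log n := Real.log_nonneg hnR
  have hpos : 0 < (1 + C * ((s : ℝ) / n) ^ k) := by positivity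
  have hLn : 0 ≤ Real.log (1 + C * ((s : ℝ) / n) ^ k) := by
    apply Real.log_nonneg
    have : 0 ≤ C * ((s : ℝ) / n) ^ k := by positivity
    linarith
  have h3 : (1 + C * ((s : ℝ) / n) ^ k) ^ m ≤ ((n : ℝ) ^ lam) ^ s := by
    rw [← Real.exp_log hpos, ← Real.exp_nat_mul, Real.rpow_def_of_pos hn0, ← Real.exp_nat_mul]
    apply Real.exp_le_exp.2
    calc (m : ℝ) * Real.log (1 + C * ((s : ℝ) / n) ^ k)
        ≤ (r * n * Real.log n) * Real.log (1 + C * ((s : ℝ) / n) ^ k) :=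
          mul_le_mul_of_nonneg_right hm hLn
      _ = (n * Real.log n) * (r * Real.log (1 + C * ((s : ℝ) / n) ^ k)) := by ring
      _ ≤ (n * Real.log n) * (lam * ((s : ℝ) / n)) :=
          mul_le_mul_of_nonneg_left hL (by positivity)
      _ = _ := by field_simp
  have h2 : (1 / (d : ℝ)) ^ s ≤ ((n : ℝ) ^ (-α)) ^ s := by
    apply pow_le_pow_left₀ (by positivity)
    rw [Real.rpow_neg hn0.le, ← one_div]
    exact one_div_le_one_div_of_le (by positivity) hd
  have h1 : (n.choose s : ℝ) ≤ (Real.exp 1 * (n : ℝ) ^ mu) ^ s :=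
    (choose_le_exp n s hs).trans (pow_le_pow_left₀ (by positivity)
      (mul_le_mul_of_nonneg_left hx (by positivity)) s)
  calc _ ≤ (Real.exp 1 * (n : ℝ) ^ mu) ^ s * ((n : ℝ) ^ (-α)) ^ s * ((n : ℝ) ^ lam) ^ s := by
        gcongr
    _ = (Real.exp 1 * (n : ℝ) ^ (mu - α + lam)) ^ s := by
        rw [← mul_pow, ← mul_pow, Real.rpow_add hn0, sub_eq_add_neg, Real.rpow_add hn0]
        congr 1; ring
    _ ≤ _ := by
        gcongr

lemma S_bound (n d m k : ℕ) (α β δ ε γ r c C : ℝ) (hk : 2 ≤ k) (hn : 1 ≤ n)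
    (hr : 0 ≤ r) (hc : 0 ≤ c) (hcC : c ≤ C) (hd1 : 1 ≤ d)
    (hd : (n : ℝ) ^ α ≤ d) (hm : (m : ℝ) ≤ r * n * Real.log n)
    (hL : ∀ x : ℝ, 0 < x → x ≤ 1 → r * Real.log (1 + C * x ^ k) ≤ (α - ε) * x)
    (hγ1 : γ ≤ ε - δ) (hγ2 : γ ≤ (α - β) / 2)
    (hsmall : r * C * (n : ℝ) ^ (-δ) ≤ (α - β) / 2)
    (hρ : Real.exp 1 * (n : ℝ) ^ (-γ) ≤ 1 / 2) :
    ∑ s ∈ range (n + 1), (n.choose s : ℝ) * (1 / (d : ℝ)) ^ s *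
      (1 - 1 / (d : ℝ)) ^ (n - s) * (1 + c * ((s : ℝ) / n) ^ k) ^ m ≤
    Real.exp (r * n * Real.log n * (C * ((n : ℝ) ^ (-β)) ^ k)) + 4 * (Real.exp 1 * (n : ℝ) ^ (-γ)) := by
  have hnR : (1 : ℝ) ≤ n := by exact_mod_cast hn
  have hn0 : (0 : ℝ) < n := by linarith
  have hdR : (1 : ℝ) ≤ d := by exact_mod_cast hd1
  have hC : 0 ≤ C := hc.trans hcC
  have hlog : 0 ≤ Real.log n := Real.log_nonneg hnR
  have h1d : 0 ≤ 1 - 1 / (d : ℝ) := by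
    rw [sub_nonneg, div_le_one (by linarith)]; exact hdR
  have h1d' : 1 - 1 / (d : ℝ) ≤ 1 := by
    have : 0 ≤ 1 / (d : ℝ) := by positivity
    linarith
  set ρ := Real.exp 1 * (n : ℝ) ^ (-γ) with hρd
  have hρ0 : 0 ≤ ρ := by positivity
  set A := Real.exp (r * n * Real.log n * (C * ((n : ℝ) ^ (-β)) ^ k)) with hA
  have hterm : ∀ s ∈ range (n + 1), (n.choose s : ℝ) * (1 / (d : ℝ)) ^ s *
      (1 - 1 / (d : ℝ)) ^ (n - s) * (1 + c * ((s : ℝ) / n) ^ k) ^ m ≤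
      A * ((1 / (d : ℝ)) ^ s * (1 - 1 / (d : ℝ)) ^ (n - s) * (n.choose s : ℝ)) + 2 * ρ * (1 / 2 : ℝ) ^ s := by
    intro s hs
    rw [mem_range] at hs
    by_cases hx : (s : ℝ) / n ≤ (n : ℝ) ^ (-β)
    · have h : (1 + c * ((s : ℝ) / n) ^ k) ^ m ≤ A := by
        have h1 : 1 + c * ((s : ℝ) / n) ^ k ≤ Real.exp (C * ((n : ℝ) ^ (-β)) ^ k) := by
          have h2 := Real.add_one_le_exp (C * ((n : ℝ) ^ (-β)) ^ k)
          have h3 : c * ((s : ℝ) / n) ^ k ≤ C * ((n : ℝ) ^ (-β)) ^ k := by gcongr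
          linarith
        refine (pow_le_pow_left₀ (by positivity) h1 m).trans ?_
        rw [← Real.exp_nat_mul]
        apply Real.exp_le_exp.2
        exact mul_le_mul_of_nonneg_right hm (by positivity)
      have h' : (n.choose s : ℝ) * (1 / (d : ℝ)) ^ s *
        (1 - 1 / (d : ℝ)) ^ (n - s) * (1 + c * ((s : ℝ) / n) ^ k) ^ m ≤ (n.choose s : ℝ) * (1 / (d : ℝ)) ^ s *
        (1 - 1 / (d : ℝ)) ^ (n - s) * A := by gcongr
      have : 0 ≤ 2 * ρ * (1 / 2 : ℝ) ^ s := by positivity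
      linarith
    · push Not at hx
      have hs0 : 0 < s := by
        rcases Nat.eq_zero_or_pos s with h | h
        · exfalso
          subst h
          have : 0 < (n : ℝ) ^ (-β) := by positivity
          simp at hx
          linarith
        · exact h
      have hsR : (0 : ℝ) < s := by exact_mod_cast hs0
      have hx0 : 0 < (s : ℝ) / n := by positivity
      have hx1 : (s : ℝ) / n ≤ 1 := by
        rw [div_le_one hn0]; exact_mod_cast (by omega)
      have hinv : ∀ μ : ℝ, (n : ℝ) ^ (-μ) ≤ (s : ℝ) / n → (n : ℝ) / s ≤ (n : ℝ) ^ μ := by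
        intro μ h
        rw [Real.rpow_neg hn0.le] at h
        have := inv_anti₀ (by positivity) h
        rwa [inv_inv, inv_div] at this
      have hb : (n.choose s : ℝ) * (1 / (d : ℝ)) ^ s * (1 + C * ((s : ℝ) / n) ^ k) ^ m ≤ ρ ^ s := by
        by_cases hy : (n : ℝ) ^ (-δ) ≤ (s : ℝ) / n
        · exact big_term n d m k s α r C (α - ε) δ γ hn hs0 hd hm hC (hL _ hx0 hx1) (hinv _ hy)
            (by linarith)
        · push Not at hy
          refine big_term n d m k s α r C ((α - β) / 2) β γ hn hs0 hd hm hC ?_ (hinv _ hx.le)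
            (by linarith)
          have h1 : Real.log (1 + C * ((s : ℝ) / n) ^ k) ≤ C * ((s : ℝ) / n) ^ k := by
            have := Real.log_le_sub_one_of_pos (show 0 < 1 + C * ((s : ℝ) / n) ^ k by positivity)
            linarith
          have h2 : ((s : ℝ) / n) ^ k ≤ (n : ℝ) ^ (-δ) * ((s : ℝ) / n) := by
            calc ((s : ℝ) / n) ^ k ≤ ((s : ℝ) / n) ^ 2 := pow_le_pow_of_le_one hx0.le hx1 hk
              _ = ((s : ℝ) / n) * ((s : ℝ) / n) := sq _
              _ ≤ _ := mul_le_mul_of_nonneg_right hy.le hx0.le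
          calc r * Real.log (1 + C * ((s : ℝ) / n) ^ k)
              ≤ r * (C * ((n : ℝ) ^ (-δ) * ((s : ℝ) / n))) := by
                gcongr
                exact h1.trans (by gcongr)
            _ = (r * C * (n : ℝ) ^ (-δ)) * ((s : ℝ) / n) := by ring
            _ ≤ _ := mul_le_mul_of_nonneg_right hsmall hx0.le
      have hρs : ρ ^ s ≤ 2 * ρ * (1 / 2 : ℝ) ^ s := by
        obtain ⟨t, rfl⟩ : ∃ t, s = t + 1 := ⟨s - 1, by omega⟩
        have := pow_le_pow_left₀ hρ0 hρ t
        have := mul_le_mul_of_nonneg_left this hρ0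
        rw [pow_succ, pow_succ]
        linarith
      have h0 : 0 ≤ A * ((1 / (d : ℝ)) ^ s * (1 - 1 / (d : ℝ)) ^ (n - s) * (n.choose s : ℝ)) := by
        positivity
      have h' : (n.choose s : ℝ) * (1 / (d : ℝ)) ^ s *
        (1 - 1 / (d : ℝ)) ^ (n - s) * (1 + c * ((s : ℝ) / n) ^ k) ^ m ≤ (n.choose s : ℝ) * (1 / (d : ℝ)) ^ s *
        1 * (1 + C * ((s : ℝ) / n) ^ k) ^ m := by
        gcongr
        exact pow_le_one₀ h1d h1d'
      rw [mul_one] at h'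
      linarith
  refine (Finset.sum_le_sum hterm).trans ?_
  rw [Finset.sum_add_distrib, ← Finset.mul_sum, ← Finset.mul_sum, ← add_pow]
  have hgeo : ∑ s ∈ range (n + 1), (1 / 2 : ℝ) ^ s ≤ 2 := by
    exact sum_geometric_two_le (n + 1)
  have := mul_le_mul_of_nonneg_left hgeo (by positivity : 0 ≤ 2 * ρ)
  have e : 1 / (d : ℝ) + (1 - 1 / (d : ℝ)) = 1 := by ring
  rw [e, one_pow, mul_one]
  linarith

end RB

namespace RB

lemma dOf_tendsto (α : ℝ) (hα : 0 < α) : Tendsto (fun n : ℕ => (dOf α n : ℝ)) atTop atTop :=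
  tendsto_atTop_mono (fun n => Nat.le_ceil _)
    ((tendsto_rpow_atTop hα).comp tendsto_natCast_atTop_atTop)

lemma ratio_tendsto (k : ℕ) (hk : 2 ≤ k) (α p : ℝ) (hα : 0 < α) (hp0 : 0 < p) :
    Tendsto (fun n : ℕ => (qOf p k (dOf α n) : ℝ) / ((dOf α n) ^ k : ℕ)) atTop (𝓝 p) := by
  have hD : Tendsto (fun n : ℕ => (((dOf α n) ^ k : ℕ) : ℝ)) atTop atTop := by
    have := (tendsto_pow_atTop (α := ℝ) (by omega : k ≠ 0)).comp (dOf_tendsto α hα)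
    refine this.congr (fun n => ?_)
    simp
  have hup : Tendsto (fun n : ℕ => p + (((dOf α n) ^ k : ℕ) : ℝ)⁻¹) atTop (𝓝 p) := by
    simpa using (tendsto_inv_atTop_zero.comp hD).const_add p
  refine tendsto_of_tendsto_of_tendsto_of_le_of_le' tendsto_const_nhds hup ?_ ?_
  · filter_upwards [hD.eventually_gt_atTop 0] with n hn
    rw [le_div_iff₀ hn]
    unfold qOf
    push_cast
    exact Nat.le_ceil _
  · filter_upwards [hD.eventually_gt_atTop 0] with n hn
    rw [div_le_iff₀ hn, add_mul, inv_mul_cancel₀ hn.ne']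
    unfold qOf
    push_cast
    exact (Nat.ceil_lt_add_one (by positivity)).le

lemma ratio_ge (k : ℕ) (p : ℝ) (d : ℕ) (hd : 0 < d) :
    p ≤ (qOf p k d : ℝ) / (d ^ k : ℕ) := by
  have : (0 : ℝ) < (d ^ k : ℕ) := by positivity
  rw [le_div_iff₀ this]
  unfold qOf
  push_cast
  exact Nat.le_ceil _

lemma upper (k : ℕ) (hk : 2 ≤ k) (α r p : ℝ) (hα : 0 < α) (hr : 0 < r) (hp0 : 0 < p) (hp1 : p < 1)
    (h : α < r * (- Real.log (1 - p))) :
    Tendsto (fun n : ℕ => prSatRB k α r p n) atTop (𝓝 0) := by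
  set ℓ := - Real.log (1 - p) with hℓ
  have hℓ0 : 0 < ℓ := by
    have := Real.log_neg (by linarith : 0 < 1 - p) (by linarith)
    linarith
  have hbound : Tendsto (fun n : ℕ => Real.exp ((n : ℝ) * (Real.log 2 + -((r * ℓ - α) * Real.log n))))
      atTop (𝓝 0) := by
    apply Real.tendsto_exp_atBot.comp
    apply Tendsto.atTop_mul_atBot₀ tendsto_natCast_atTop_atTop
    apply tendsto_atBot_add_const_left
    apply tendsto_neg_atTop_atBot.comp
    exact (Real.tendsto_log_atTop.comp tendsto_natCast_atTop_atTop).const_mul_atTop (by linarith)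
  refine tendsto_of_tendsto_of_tendsto_of_le_of_le' tendsto_const_nhds hbound
    (Eventually.of_forall fun n => prSat_nonneg _ _ _ _ _) ?_
  filter_upwards [eventually_ge_atTop k, (ratio_tendsto k hk α p hα hp0).eventually_lt_const hp1]
    with n hkn hq
  have hnR : (1 : ℝ) ≤ n := by exact_mod_cast (by omega : 1 ≤ n)
  have hn0 : (0 : ℝ) < n := by linarith
  have hd1 : (1 : ℝ) ≤ (n : ℝ) ^ α := Real.one_le_rpow hnR hα.le
  have hdn : (n : ℝ) ^ α ≤ dOf α n := Nat.le_ceil _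
  have hdu : (dOf α n : ℝ) ≤ 2 * (n : ℝ) ^ α := by
    have : (dOf α n : ℝ) < (n : ℝ) ^ α + 1 := Nat.ceil_lt_add_one (by positivity)
    linarith
  have hd0 : 0 < dOf α n := by
    have : (0 : ℝ) < dOf α n := by linarith
    exact_mod_cast this
  have hD : (0 : ℝ) < ((dOf α n) ^ k : ℕ) := by positivity
  have hge := ratio_ge k p (dOf α n) hd0
  have hq' : qOf p k (dOf α n) < (dOf α n) ^ k := by
    rw [div_lt_one hD] at hq
    exact_mod_cast hq
  refine (prSat_first k n _ _ (mOf r n) hkn hq').trans ?_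
  have hm : r * n * Real.log n ≤ mOf r n := Nat.le_ceil _
  have h1 : (dOf α n : ℝ) ^ n ≤ Real.exp (n * (Real.log 2 + α * Real.log n)) := by
    refine (pow_le_pow_left₀ (by positivity) hdu n).trans (le_of_eq ?_)
    rw [Real.exp_nat_mul, Real.exp_add, Real.exp_log two_pos, Real.rpow_def_of_pos hn0, mul_comm α]
  have h2 : (1 - (qOf p k (dOf α n) : ℝ) / ((dOf α n) ^ k : ℕ)) ^ (mOf r n) ≤
      Real.exp (-(r * n * Real.log n * ℓ)) := by
    refine (pow_le_pow_left₀ (by linarith) (by linarith : _ ≤ 1 - p) _).trans ?_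
    rw [← Real.exp_log (by linarith : 0 < 1 - p), ← Real.exp_nat_mul]
    apply Real.exp_le_exp.2
    have := mul_le_mul_of_nonneg_right hm hℓ0.le
    have e : Real.log (1 - p) = -ℓ := by rw [hℓ]; ring
    rw [e]
    linarith
  refine (mul_le_mul h1 h2 (pow_nonneg (by linarith) _) (by positivity)).trans (le_of_eq ?_)
  rw [← Real.exp_add]
  congr 1
  ring

lemma lower (k : ℕ) (hk : 2 ≤ k) (α r p : ℝ) (hα : 1 / (k : ℝ) < α) (hr : 0 < r) (hp0 : 0 < p)
    (hp1 : p ≤ ((k : ℝ) - 1) / k) (h : r * (- Real.log (1 - p)) < α) :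
    Tendsto (fun n : ℕ => prSatRB k α r p n) atTop (𝓝 1) := by
  have hkR : (2 : ℝ) ≤ k := by exact_mod_cast hk
  have hk0 : (0 : ℝ) < k := by linarith
  have hα0 : 0 < α := lt_trans (by positivity) hα
  have hkp : k * (1 - p) ≥ 1 := by
    rw [le_div_iff₀ hk0] at hp1
    nlinarith
  have hp1' : 0 < 1 - p := by
    by_contra hcon
    push Not at hcon
    nlinarith
  set ℓ := - Real.log (1 - p) with hℓ
  have hℓ0 : 0 < ℓ := by
    have := Real.log_neg hp1' (by linarith)
    linarith
  set c := p / (1 - p) with hc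
  have hc0 : 0 ≤ c := by positivity
  have h1c : 1 + c = (1 - p)⁻¹ := by rw [hc]; field_simp; ring
  have hlc : Real.log (1 + c) = ℓ := by rw [h1c, Real.log_inv]
  have hck : 1 + c ≤ k := by
    rw [h1c, inv_le_iff_one_le_mul₀ hp1']; linarith
  -- choice of constants
  obtain ⟨r', hrr', hr'⟩ : ∃ r', r < r' ∧ r' * ℓ < α := by
    refine ⟨(r + α / ℓ) / 2, ?_, ?_⟩
    · have : r < α / ℓ := by rwa [lt_div_iff₀ hℓ0]
      linarith
    · have : α / ℓ * ℓ = α := by field_simp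
      nlinarith
  have hr'0 : 0 < r' := hr.trans hrr'
  set ε := (α - r' * ℓ) / 2 with hε
  have hε0 : 0 < ε := by rw [hε]; linarith
  set η := ε / r' with hη
  have hη0 : 0 < η := by positivity
  have hrη : r' * η = ε := by rw [hη]; field_simp
  set C := c + η with hCd
  have hC0 : 0 < C := by linarith
  have hL : ∀ x : ℝ, 0 < x → x ≤ 1 → r' * Real.log (1 + C * x ^ k) ≤ (α - ε) * x := by
    intro x hx0 hx1
    have hxk : x ^ k ≤ x := pow_le_of_le_one hx0.le hx1 (by omega)
    have hxk0 : 0 < x ^ k := by positivity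
    have hcx : 0 ≤ c * x ^ k := by positivity
    have hηx : 0 ≤ η * x ^ k := by positivity
    have h1 : 1 + C * x ^ k ≤ (1 + c * x ^ k) * (1 + η * x ^ k) := by
      rw [hCd]; nlinarith [mul_nonneg hcx hηx]
    have h2 : Real.log (1 + C * x ^ k) ≤ Real.log (1 + c * x ^ k) + Real.log (1 + η * x ^ k) := by
      rw [← Real.log_mul (by linarith) (by linarith)]
      exact Real.log_le_log (by positivity) h1
    have h3 := log_ineq k (by omega) c hc0 hck x hx0 hx1
    have h4 := Real.log_le_sub_one_of_pos (show 0 < 1 + η * x ^ k by linarith)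
    have h5 : η * x ^ k ≤ η * x := mul_le_mul_of_nonneg_left hxk hη0.le
    rw [hlc] at h3
    have h6 : Real.log (1 + C * x ^ k) ≤ x * ℓ + η * x := by linarith
    calc _ ≤ r' * (x * ℓ + η * x) := mul_le_mul_of_nonneg_left h6 hr'0.le
      _ = (r' * ℓ + r' * η) * x := by ring
      _ = _ := by rw [hrη, hε]; ring
  set β := (1 / (k : ℝ) + α) / 2 with hβ
  have hβα : β < α := by linarith
  have hβk : 1 < β * k := by
    have : 1 / (k : ℝ) < β := by linarith
    rwa [div_lt_iff₀ hk0] at this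
  set γ := min (ε / 2) ((α - β) / 2) with hγ
  have hγ0 : 0 < γ := lt_min (by linarith) (by linarith)
  have hnat := tendsto_natCast_atTop_atTop (R := ℝ)
  -- limits
  have hρ : Tendsto (fun n : ℕ => Real.exp 1 * (n : ℝ) ^ (-γ)) atTop (𝓝 0) := by
    simpa using ((tendsto_rpow_neg_atTop hγ0).comp hnat).const_mul (Real.exp 1)
  have hsm : Tendsto (fun n : ℕ => r' * C * (n : ℝ) ^ (-(ε / 2))) atTop (𝓝 0) := by
    simpa using ((tendsto_rpow_neg_atTop (by linarith : 0 < ε / 2)).comp hnat).const_mul (r' * C)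
  have hA0 : Tendsto (fun n : ℕ => r' * n * Real.log n * (C * ((n : ℝ) ^ (-β)) ^ k)) atTop (𝓝 0) := by
    have h0 := (isLittleO_log_rpow_atTop (by linarith : 0 < β * k - 1)).tendsto_div_nhds_zero
    have h1 := (h0.comp hnat).const_mul (r' * C)
    rw [mul_zero] at h1
    refine h1.congr' ?_
    filter_upwards [eventually_ge_atTop 1] with n hn
    have hn0 : (0 : ℝ) < n := by exact_mod_cast hn
    simp only [Function.comp]
    rw [← Real.rpow_natCast ((n : ℝ) ^ (-β)), ← Real.rpow_mul hn0.le, Real.rpow_sub hn0, Real.rpow_one,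
      neg_mul, Real.rpow_neg hn0.le]
    field_simp
  have hU : Tendsto (fun n : ℕ => (Real.exp (r' * n * Real.log n * (C * ((n : ℝ) ^ (-β)) ^ k)) +
      4 * (Real.exp 1 * (n : ℝ) ^ (-γ)))⁻¹) atTop (𝓝 1) := by
    have h1 := (Real.continuous_exp.tendsto 0).comp hA0
    have h2 := (h1.add (hρ.const_mul 4)).inv₀ (by simp)
    simpa using h2
  have hratio := ratio_tendsto k hk α p hα0 hp0
  have hcn : Tendsto (fun n : ℕ => ((qOf p k (dOf α n) : ℝ) / ((dOf α n) ^ k : ℕ)) /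
      (1 - (qOf p k (dOf α n) : ℝ) / ((dOf α n) ^ k : ℕ))) atTop (𝓝 c) :=
    hratio.div (hratio.const_sub 1) hp1'.ne'
  have hmt : Tendsto (fun n : ℕ => (r' - r) * ((n : ℝ) * Real.log n)) atTop atTop :=
    (hnat.atTop_mul_atTop₀ (Real.tendsto_log_atTop.comp hnat)).const_mul_atTop (by linarith)
  refine tendsto_of_tendsto_of_tendsto_of_le_of_le' hU tendsto_const_nhds ?_
    (Eventually.of_forall fun n => prSat_le_one _ _ _ _ _)
  filter_upwards [eventually_ge_atTop k, hratio.eventually_lt_const (by linarith : p < 1),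
    hcn.eventually_lt_const (by linarith : c < C), hmt.eventually_ge_atTop 1,
    hρ.eventually_le_const (by norm_num : (0 : ℝ) < 1 / 2),
    hsm.eventually_le_const (by linarith : 0 < (α - β) / 2)] with n hkn hq hcC hmm hρn hsmn
  have hnR : (1 : ℝ) ≤ n := by exact_mod_cast (by omega : 1 ≤ n)
  have hn0 : (0 : ℝ) < n := by linarith
  have hd1 : (1 : ℝ) ≤ (n : ℝ) ^ α := Real.one_le_rpow hnR hα0.le
  have hdn : (n : ℝ) ^ α ≤ dOf α n := Nat.le_ceil _
  have hd0 : 0 < dOf α n := by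
    have : (0 : ℝ) < dOf α n := by linarith
    exact_mod_cast this
  have hD : (0 : ℝ) < ((dOf α n) ^ k : ℕ) := by positivity
  have hge := ratio_ge k p (dOf α n) hd0
  have hq' : qOf p k (dOf α n) < (dOf α n) ^ k := by
    have := hq
    rw [div_lt_one hD] at this
    exact_mod_cast this
  have hm : (mOf r n : ℝ) ≤ r' * n * Real.log n := by
    have hlog : 0 ≤ Real.log n := Real.log_nonneg hnR
    have : (mOf r n : ℝ) < r * n * Real.log n + 1 := Nat.ceil_lt_add_one (by positivity)
    nlinarith
  have hcn0 : 0 ≤ ((qOf p k (dOf α n) : ℝ) / ((dOf α n) ^ k : ℕ)) /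
      (1 - (qOf p k (dOf α n) : ℝ) / ((dOf α n) ^ k : ℕ)) :=
    div_nonneg (by linarith) (by linarith)
  have hS := S_bound n (dOf α n) (mOf r n) k α β (ε / 2) ε γ r' _ C hk (by omega) hr'0.le hcn0 hcC.le
    hd0 hdn hm hL ((min_le_left _ _).trans (by linarith)) (min_le_right _ _) hsmn hρn
  have h2 := prSat_second k n (dOf α n) (qOf p k (dOf α n)) (mOf r n) (by omega) hkn hd0 hq'
  have h3 := h2.trans (mul_le_mul_of_nonneg_left hS (prSat_nonneg _ _ _ _ _))
  rw [inv_le_iff_one_le_mul₀ (by positivity)]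
  exact h3

end RB


/-- **Phase transition of model RB in the density parameter `r`** (Theorem 1):
for an integer `k ≥ 2` and real constants `α > 1/k`, `r > 0` and `0 < p ≤ (k-1)/k`,
the probability that a random instance of `RB(k,n,α,r,p)` is satisfiable tends,
as `n → ∞`, to `1` if `r < r_cr` and to `0` if `r > r_cr`,
where `r_cr = -α / ln (1-p)`. -/
theorem rb_phase_transition_in_r (k : ℕ) (hk : 2 ≤ k) (α r p : ℝ)
    (hα : 1 / (k : ℝ) < α) (hr : 0 < r) (hp0 : 0 < p) (hp1 : p ≤ ((k : ℝ) - 1) / k) :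
    (r < -α / Real.log (1 - p) →
      Tendsto (fun n : ℕ => RB.prSatRB k α r p n) atTop (𝓝 1)) ∧
    (-α / Real.log (1 - p) < r →
      Tendsto (fun n : ℕ => RB.prSatRB k α r p n) atTop (𝓝 0)) := by
  have hkR : (2 : ℝ) ≤ k := by exact_mod_cast hk
  have hp1' : p < 1 := by
    refine hp1.trans_lt ?_
    rw [div_lt_one (by linarith)]; linarith
  have hlog : Real.log (1 - p) < 0 := Real.log_neg (by linarith) (by linarith)
  have hα0 : 0 < α := lt_trans (by positivity) hα
  have e : -α / Real.log (1 - p) = α / (-Real.log (1 - p)) := by rw [div_neg, neg_div]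
  rw [e]
  refine ⟨fun h => RB.lower k hk α r p hα hr hp0 hp1 ?_, fun h => RB.upper k hk α r p hα0 hr hp0 hp1' ?_⟩
  · rwa [lt_div_iff₀ (by linarith)] at h
  · rwa [div_lt_iff₀ (by linarith)] at h
end

section
/- Let k ≥ 2 be an integer and let α > 0, r > 0 and 0 < p < 1 be real constants with r > -α/ln(1-p). Then the probability that a random instance of RB(k,n,α,r,p) is satisfiable tends to 0 as n → ∞. -/
namespace RB

lemma card_avoid_s6 {T : Type} [Fintype T] [DecidableEq T] (t : T) (q : ℕ) (p : ℝ)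
    (hq : q ≤ Fintype.card T) (hp : p * Fintype.card T ≤ q) :
    ((Finset.univ.filter fun F : Finset T => F.card = q ∧ t ∉ F).card : ℝ)
      ≤ (1 - p) * ((Finset.univ.filter fun F : Finset T => F.card = q).card : ℝ) := by
  have h1 : (Finset.univ.filter fun F : Finset T => F.card = q ∧ t ∉ F)
      = (Finset.univ.erase t).powersetCard q := by
    ext F
    simp only [Finset.mem_filter, Finset.mem_univ, true_and, Finset.mem_powersetCard]
    constructor
    · rintro ⟨h, h'⟩
      exact ⟨fun x hx => Finset.mem_erase.2 ⟨fun e => h' (e ▸ hx), Finset.mem_univ _⟩, h⟩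
    · rintro ⟨h, h'⟩
      exact ⟨h', fun e => by simpa using h e⟩
  have h2 : (Finset.univ.filter fun F : Finset T => F.card = q)
      = (Finset.univ : Finset T).powersetCard q := by
    ext F
    simp [Finset.mem_powersetCard]
  rw [h1, h2, Finset.card_powersetCard, Finset.card_powersetCard,
    Finset.card_erase_of_mem (Finset.mem_univ _), Finset.card_univ]
  have hN : 0 < Fintype.card T := Fintype.card_pos_iff.2 ⟨t⟩
  obtain ⟨N, hN'⟩ : ∃ N, Fintype.card T = N + 1 := ⟨_, (Nat.succ_pred_eq_of_pos hN).symm⟩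
  rw [hN'] at hq hp ⊢
  rw [Nat.add_sub_cancel]
  have key := Nat.choose_mul_succ_eq N q
  have key' : (N.choose q : ℝ) * ((N + 1 : ℕ) : ℝ)
      = ((N + 1).choose q : ℝ) * (((N + 1 : ℕ) : ℝ) - q) := by
    rw [← Nat.cast_sub hq]
    exact_mod_cast key
  have hpos : (0 : ℝ) < ((N + 1 : ℕ) : ℝ) := by positivity
  have hc : (0 : ℝ) ≤ ((N + 1).choose q : ℝ) := by positivity
  refine le_of_mul_le_mul_right ?_ hpos
  rw [key']
  nlinarith [mul_le_mul_of_nonneg_left hp hc]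

lemma card_sigma_filter {n d : ℕ} (Q : Constraint n d → Prop) [DecidablePred Q] :
    (Finset.univ.filter Q).card
      = ∑ s : Finset (Fin n), (Finset.univ.filter fun F : Finset (↥s → Fin d) => Q ⟨s, F⟩).card := by
  simp only [Finset.card_filter]
  rw [Fintype.sum_sigma]

open scoped Classical in
lemma card_sat_constraint (k n d q : ℕ) (p : ℝ) (hq : q ≤ d ^ k)
    (hp : p * (d : ℝ) ^ k ≤ q) (a : Fin n → Fin d) :
    ((Finset.univ.filter fun c : ValidConstraint k n d q => satisfies a c.1).card : ℝ)
      ≤ (1 - p) * (Fintype.card (ValidConstraint k n d q) : ℝ) := by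
  have h1 : (Finset.univ.filter fun c : ValidConstraint k n d q => satisfies a c.1).card
      = (Finset.univ.filter fun c : Constraint n d =>
          (c.1.card = k ∧ c.2.card = q) ∧ satisfies a c).card := by
    rw [← Finset.card_map (Function.Embedding.subtype _)]
    congr 1
    ext c
    simp only [Finset.mem_map, Finset.mem_filter, Finset.mem_univ, true_and,
      Function.Embedding.subtype_apply]
    constructor
    · rintro ⟨x, hx, rfl⟩
      exact ⟨x.2, hx⟩
    · rintro ⟨h, h'⟩
      exact ⟨⟨c, h⟩, h', rfl⟩
  have h2 : Fintype.card (ValidConstraint k n d q)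
      = (Finset.univ.filter fun c : Constraint n d => c.1.card = k ∧ c.2.card = q).card :=
    Fintype.card_subtype _
  rw [h1, h2, card_sigma_filter, card_sigma_filter]
  push_cast
  rw [Finset.mul_sum]
  refine Finset.sum_le_sum fun s _ => ?_
  by_cases hs : s.card = k
  · have hc : Fintype.card (↥s → Fin d) = d ^ k := by simp [hs]
    have := card_avoid_s6 (T := ↥s → Fin d) (fun i => a i.1) q p (by rw [hc]; exact hq)
      (by rw [hc]; exact_mod_cast hp)
    refine le_trans (le_of_eq ?_) (this.trans (le_of_eq ?_))
    · congr 2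
      ext F
      rw [Finset.mem_filter, Finset.mem_filter]
      exact ⟨fun h => ⟨Finset.mem_univ _, h.2.1.2, h.2.2⟩,
        fun h => ⟨Finset.mem_univ _, ⟨hs, h.2.1⟩, h.2.2⟩⟩
    · congr 3
      ext F
      rw [Finset.mem_filter, Finset.mem_filter]
      exact ⟨fun h => ⟨Finset.mem_univ _, hs, h.2⟩, fun h => ⟨Finset.mem_univ _, h.2.2⟩⟩
  · simp [hs]

open scoped Classical in
lemma prSat_le (k n d q m : ℕ) (p : ℝ) (hp1 : p < 1) (hq : q ≤ d ^ k)
    (hp : p * (d : ℝ) ^ k ≤ q) :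
    prSat k n d q m ≤ (d : ℝ) ^ n * (1 - p) ^ m := by
  unfold prSat
  have h0 : (0 : ℝ) ≤ (1 - p) ^ m := pow_nonneg (by linarith) _
  refine div_le_of_le_mul₀ (by positivity) (by positivity) ?_
  have hsub : (Finset.univ.filter fun P : Instance k n d q m =>
      ∃ a : Fin n → Fin d, satInstance a P)
      ⊆ (Finset.univ : Finset (Fin n → Fin d)).biUnion fun a =>
        Fintype.piFinset fun _ : Fin m =>
          Finset.univ.filter fun c : ValidConstraint k n d q => satisfies a c.1 := by
    intro P hP
    obtain ⟨a, ha⟩ := (Finset.mem_filter.1 hP).2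
    refine Finset.mem_biUnion.2 ⟨a, Finset.mem_univ _, ?_⟩
    exact Fintype.mem_piFinset.2 fun i => Finset.mem_filter.2 ⟨Finset.mem_univ _, ha i⟩
  have hcard := (Finset.card_le_card hsub).trans Finset.card_biUnion_le
  refine (Nat.cast_le.2 hcard).trans ?_
  push_cast
  calc _ ≤ ∑ a : Fin n → Fin d,
        ((1 - p) * (Fintype.card (ValidConstraint k n d q) : ℝ)) ^ m := by
        refine Finset.sum_le_sum fun a _ => ?_
        rw [Fintype.card_piFinset, Finset.prod_const, Finset.card_univ, Fintype.card_fin]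
        push_cast
        exact pow_le_pow_left₀ (by positivity) (card_sat_constraint k n d q p hq hp a) m
    _ = _ := by
        rw [Finset.sum_const, Finset.card_univ, Fintype.card_fun, Fintype.card_fun,
          Fintype.card_fin, Fintype.card_fin, Fintype.card_fin, nsmul_eq_mul, mul_pow]
        push_cast
        ring

lemma prSatRB_le (k : ℕ) (α r p : ℝ) (hα : 0 < α) (hp0 : 0 < p) (hp1 : p < 1)
    (n : ℕ) (hn : 1 ≤ n) :
    prSatRB k α r p n ≤
      Real.exp (n * (Real.log 2 - (-(r * Real.log (1 - p)) - α) * Real.log n)) := by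
  have hn' : (1 : ℝ) ≤ n := by exact_mod_cast hn
  have hnα : (1 : ℝ) ≤ (n : ℝ) ^ α := Real.one_le_rpow hn' hα.le
  have hlog : Real.log (1 - p) < 0 := Real.log_neg (by linarith) (by linarith)
  have hd1 : (0 : ℝ) < dOf α n := by
    have : (n : ℝ) ^ α ≤ dOf α n := Nat.le_ceil _
    linarith
  have hd2 : (dOf α n : ℝ) ≤ 2 * (n : ℝ) ^ α := by
    have : (dOf α n : ℝ) < (n : ℝ) ^ α + 1 := Nat.ceil_lt_add_one (by linarith)
    linarith
  have hld : Real.log (dOf α n) ≤ Real.log 2 + α * Real.log n := by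
    refine (Real.log_le_log hd1 hd2).trans_eq ?_
    rw [Real.log_mul (by norm_num) (by linarith), Real.log_rpow (by linarith)]
  have hm : r * n * Real.log n ≤ mOf r n := Nat.le_ceil _
  refine (prSat_le k n _ _ _ p hp1 ?_ (Nat.le_ceil _)).trans ?_
  · refine Nat.ceil_le.2 ?_
    push_cast
    have : (0 : ℝ) ≤ (dOf α n : ℝ) ^ k := by positivity
    nlinarith
  · rw [← Real.exp_log (pow_pos hd1 n), ← Real.exp_log (pow_pos (sub_pos.2 hp1) (mOf r n)),
      ← Real.exp_add, Real.log_pow, Real.log_pow]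
    refine Real.exp_le_exp.2 ?_
    have e1 := mul_le_mul_of_nonneg_left hld (by linarith : (0 : ℝ) ≤ n)
    have e2 := mul_le_mul_of_nonpos_right hm hlog.le
    nlinarith

end RB

open Filter Topology

/-- Above the threshold `r_cr = -α / ln (1-p)`, random instances of `RB(k,n,α,r,p)`
are almost surely unsatisfiable: for an integer `k ≥ 2` and real constants `α > 0`,
`r > 0` and `0 < p < 1` with `r > -α / ln (1-p)`, the probability that a random
instance of `RB(k,n,α,r,p)` is satisfiable tends to `0` as `n → ∞`. -/
theorem rb_unsat_above_threshold (k : ℕ) (hk : 2 ≤ k) (α r p : ℝ)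
    (hα : 0 < α) (hr : 0 < r) (hp0 : 0 < p) (hp1 : p < 1)
    (hcr : -α / Real.log (1 - p) < r) :
    Tendsto (fun n : ℕ => RB.prSatRB k α r p n) atTop (𝓝 0) := by
  have hlog : Real.log (1 - p) < 0 := Real.log_neg (by linarith) (by linarith)
  have hc : 0 < -(r * Real.log (1 - p)) - α := by
    rw [div_lt_iff_of_neg hlog] at hcr
    linarith
  have hnn : ∀ n, 0 ≤ RB.prSatRB k α r p n := fun n => by
    unfold RB.prSatRB RB.prSat
    positivity
  refine tendsto_of_tendsto_of_tendsto_of_le_of_le' tendsto_const_nhds ?_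
    (Eventually.of_forall hnn)
    ((eventually_ge_atTop 1).mono fun n hn => RB.prSatRB_le k α r p hα hp0 hp1 n hn)
  refine Real.tendsto_exp_atBot.comp ?_
  refine Tendsto.atTop_mul_atBot₀ tendsto_natCast_atTop_atTop ?_
  have h1 : Tendsto (fun n : ℕ => (-(r * Real.log (1 - p)) - α) * Real.log n) atTop atTop :=
    (Real.tendsto_log_atTop.comp tendsto_natCast_atTop_atTop).const_mul_atTop hc
  simpa [sub_eq_add_neg] using
    tendsto_atBot_add_const_left atTop (Real.log 2) (tendsto_neg_atTop_atBot.comp h1)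
end

section
/- Consider a single random RB constraint over n variables (k ≤ n) with common domain D of size d: its scope is a uniformly random set of k distinct variables, and its forbidden set is a uniformly random set of exactly q tuples from D^k (0 ≤ q ≤ d^k). Let t and t' be two total assignments that agree on exactly a variables (so a ≤ n), and set ρ = C(a,k)/C(n,k). Then the probability that both t and t' satisfy the constraint equals ρ·(1 - q/d^k) + (1-ρ)·C(d^k - 2, q)/C(d^k, q). -/
open scoped Classical

theorem rb_aux_choose (α : Type) [Fintype α] (A : Finset α) (q : ℕ) :
    (Finset.univ.filter fun F : Finset α => F.card = q ∧ Disjoint F A).card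
      = (Fintype.card α - A.card).choose q := by
  rw [← Finset.card_compl, ← Finset.card_powersetCard]
  congr 1
  ext F
  simp only [Finset.mem_filter, Finset.mem_univ, true_and, Finset.mem_powersetCard,
    Finset.subset_compl_iff_disjoint_right]
  tauto

theorem rb_aux_card (k n d q : ℕ) (P : RB.Constraint n d → Prop) :
    (Finset.univ.filter fun c : RB.ValidConstraint k n d q => P c.1).card
      = ∑ s ∈ (Finset.univ : Finset (Fin n)).powersetCard k,
          (Finset.univ.filter fun F : Finset (↥s → Fin d) => F.card = q ∧ P ⟨s, F⟩).card := by
  rw [← Finset.card_sigma]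
  refine Finset.card_bij (fun c _ => c.1) ?_ ?_ ?_
  · rintro ⟨⟨s, F⟩, h1, h2⟩ h
    simp only [Finset.mem_filter, Finset.mem_univ, true_and] at h
    simp only [Finset.mem_sigma, Finset.mem_powersetCard, Finset.subset_univ, true_and,
      Finset.mem_filter, Finset.mem_univ]
    exact ⟨h1, h2, h⟩
  · intro c _ c' _ h
    exact Subtype.ext h
  · rintro ⟨s, F⟩ h
    simp only [Finset.mem_sigma, Finset.mem_powersetCard, Finset.subset_univ, true_and,
      Finset.mem_filter, Finset.mem_univ] at h
    exact ⟨⟨⟨s, F⟩, h.1, h.2.1⟩, by simpa using h.2.2, rfl⟩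

theorem rb_aux_total (k n d q : ℕ) :
    Fintype.card (RB.ValidConstraint k n d q) = n.choose k * (d ^ k).choose q := by
  have h := rb_aux_card k n d q (fun _ => True)
  have h0 : (Finset.univ.filter fun c : RB.ValidConstraint k n d q => True).card
      = Fintype.card (RB.ValidConstraint k n d q) := by
    rw [Finset.filter_true, Finset.card_univ]
  have h1 := h0.symm.trans ((by congr!) : _ = _) |>.trans h
  rw [h1, Finset.sum_congr rfl (g := fun _ => (d ^ k).choose q)]
  · simp
  · intro s hs
    have := rb_aux_choose (↥s → Fin d) ∅ q
    simp only [Finset.mem_powersetCard] at hs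
    simpa [hs.2] using this

theorem rb_aux_pair (k n d q a : ℕ) (t t' : Fin n → Fin d)
    (ha : (Finset.univ.filter fun i : Fin n => t i = t' i).card = a) :
    (Finset.univ.filter fun c : RB.ValidConstraint k n d q =>
        RB.satisfies t c.1 ∧ RB.satisfies t' c.1).card + a.choose k * (d ^ k - 2).choose q
      = a.choose k * (d ^ k - 1).choose q + n.choose k * (d ^ k - 2).choose q := by
  set G := Finset.univ.filter fun i : Fin n => t i = t' i with hG
  have e1 : (Finset.univ.filter fun c : RB.ValidConstraint k n d q =>
        RB.satisfies t c.1 ∧ RB.satisfies t' c.1).card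
      = ∑ s ∈ (Finset.univ : Finset (Fin n)).powersetCard k,
        (Finset.univ.filter fun F : Finset (↥s → Fin d) => F.card = q ∧
          (RB.satisfies t ⟨s, F⟩ ∧ RB.satisfies t' ⟨s, F⟩)).card := by
    have := rb_aux_card k n d q (fun c => RB.satisfies t c ∧ RB.satisfies t' c)
    convert this
  have e2 : ∀ s ∈ (Finset.univ : Finset (Fin n)).powersetCard k,
      (Finset.univ.filter fun F : Finset (↥s → Fin d) => F.card = q ∧
        (RB.satisfies t ⟨s, F⟩ ∧ RB.satisfies t' ⟨s, F⟩)).card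
      = if s ⊆ G then (d ^ k - 1).choose q else (d ^ k - 2).choose q := by
    intro s hs
    simp only [Finset.mem_powersetCard] at hs
    have := rb_aux_choose (↥s → Fin d) {(fun i => t i.1), (fun i => t' i.1)} q
    have hc : Fintype.card (↥s → Fin d) = d ^ k := by simp [hs.2]
    rw [hc] at this
    have h3 : (Finset.univ.filter fun F : Finset (↥s → Fin d) => F.card = q ∧
        (RB.satisfies t ⟨s, F⟩ ∧ RB.satisfies t' ⟨s, F⟩)).card = 
        (Finset.univ.filter fun F : Finset (↥s → Fin d) => F.card = q ∧
          Disjoint F {(fun i => t i.1), (fun i => t' i.1)}).card := by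
      congr 1
      ext F
      rw [Finset.mem_filter, Finset.mem_filter]
      simp [RB.satisfies]
    have h3' := h3.trans ((by congr!) : _ = _) |>.trans this
    rw [h3']
    have h4 : s ⊆ G ↔ (fun i : ↥s => t i.1) = (fun i : ↥s => t' i.1) := by
      simp [hG, funext_iff, Finset.subset_iff]
    split_ifs with h
    · rw [h4.1 h]; simp
    · rw [Finset.card_pair (fun h' => h (h4.2 h'))]
  rw [e1, Finset.sum_congr rfl e2, Finset.sum_ite, Finset.sum_const, Finset.sum_const]
  have h5 : ((Finset.univ : Finset (Fin n)).powersetCard k).filter (fun s => s ⊆ G)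
      = G.powersetCard k := by
    ext s
    simp only [Finset.mem_filter, Finset.mem_powersetCard, Finset.subset_univ, true_and]
    tauto
  have h6 := Finset.card_filter_add_card_filter_not
    (s := (Finset.univ : Finset (Fin n)).powersetCard k) (fun s => s ⊆ G)
  rw [h5] at h6 ⊢
  rw [Finset.card_powersetCard, ha] at h6 ⊢
  rw [Finset.card_powersetCard, Finset.card_univ, Fintype.card_fin] at h6
  rw [← h6]
  simp only [smul_eq_mul]
  ring

/-- **Probability that two assignments both satisfy a single random RB constraint**:
for a uniformly random constraint over `n` variables (`k ≤ n`) with common domain of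
size `d` (its scope a uniformly random set of `k` distinct variables and its forbidden
set a uniformly random set of exactly `q ≤ d^k` tuples), if the total assignments `t`
and `t'` agree on exactly `a` variables, then, with `ρ = C(a,k)/C(n,k)`, the probability
that both `t` and `t'` satisfy the constraint equals
`ρ·(1 - q/d^k) + (1-ρ)·C(d^k - 2, q)/C(d^k, q)`. -/
theorem rb_constraint_pair_probability (k n d q a : ℕ) (hkn : k ≤ n) (hq : q ≤ d ^ k)
    (t t' : Fin n → Fin d)
    (ha : (Finset.univ.filter fun i : Fin n => t i = t' i).card = a) :
    ((Finset.univ.filter fun c : RB.ValidConstraint k n d q =>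
        RB.satisfies t c.1 ∧ RB.satisfies t' c.1).card : ℝ)
      / (Fintype.card (RB.ValidConstraint k n d q))
    = ((a.choose k : ℝ) / (n.choose k)) * (1 - (q : ℝ) / (d : ℝ) ^ k)
      + (1 - (a.choose k : ℝ) / (n.choose k)) *
          (((d ^ k - 2).choose q : ℝ) / ((d ^ k).choose q)) := by
  have hN : 0 < d ^ k := by
    rcases Nat.eq_zero_or_pos d with h | h
    · subst h
      rcases Nat.eq_zero_or_pos n with h | h
      · have : k = 0 := by omega
        simp [this]
      · exact (t ⟨0, h⟩).elim0
    · positivity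
  have hp := rb_aux_pair k n d q a t t' ha
  have hp' : ((Finset.univ.filter fun c : RB.ValidConstraint k n d q =>
        RB.satisfies t c.1 ∧ RB.satisfies t' c.1).card : ℝ)
      + (a.choose k : ℝ) * ((d ^ k - 2).choose q : ℝ)
      = (a.choose k : ℝ) * ((d ^ k - 1).choose q : ℝ)
        + (n.choose k : ℝ) * ((d ^ k - 2).choose q : ℝ) := by exact_mod_cast hp
  rw [rb_aux_total, eq_sub_of_add_eq hp']
  have hc : (d : ℝ) ^ k = ((d ^ k : ℕ) : ℝ) := by push_cast; rfl
  rw [hc]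
  generalize d ^ k = N at *
  have h1 : ((N - 1).choose q : ℝ) * N = (N.choose q : ℝ) * (N - q) := by
    obtain ⟨M, rfl⟩ : ∃ M, N = M + 1 := ⟨N - 1, by omega⟩
    have := Nat.choose_mul_succ_eq M q
    rw [Nat.add_sub_cancel, ← Nat.cast_sub hq]
    exact_mod_cast this
  have hn0 : (n.choose k : ℝ) ≠ 0 := by exact_mod_cast (Nat.choose_pos hkn).ne'
  have hq0 : (N.choose q : ℝ) ≠ 0 := by exact_mod_cast (Nat.choose_pos hq).ne'
  have hN0 : (N : ℝ) ≠ 0 := by exact_mod_cast hN.ne'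
  have h2 : ((N - 1).choose q : ℝ) = (N.choose q : ℝ) * (1 - q / N) := by
    field_simp
    linarith
  rw [h2]
  push_cast
  field_simp
  ring
end

section
/- Consider a single forced random RB constraint over n variables (k ≤ n) with common domain D of size d, forced to allow a fixed total assignment t: its scope is a uniformly random set of k distinct variables, and its forbidden set is a uniformly random set of exactly q tuples (0 ≤ q ≤ d^k - 1) from D^k excluding the tuple induced by t on the scope. Let t' be a total assignment agreeing with t on exactly a variables, and set ρ = C(a,k)/C(n,k). Then the probability that t' satisfies the constraint equals ρ + (1-ρ)·(1 - q/(d^k - 1)). -/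
open scoped Classical

theorem rb_aux_count (k n d q : ℕ) (P : RB.Constraint n d → Prop)
    [DecidablePred fun c : RB.ValidConstraint k n d q => P c.1] :
    (Finset.univ.filter fun c : RB.ValidConstraint k n d q => P c.1).card
      = ∑ s ∈ Finset.powersetCard k (Finset.univ : Finset (Fin n)),
        (Finset.univ.filter fun F : Finset (↥s → Fin d) => F.card = q ∧ P ⟨s, F⟩).card := by
  rw [← Finset.card_sigma]
  refine Finset.card_bij (fun c _ => c.1) ?_ ?_ ?_
  · rintro ⟨c, h1, h2⟩ hc
    simp only [Finset.mem_filter, Finset.mem_univ, true_and] at hc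
    simp [Finset.mem_sigma, Finset.mem_powersetCard, h1, h2, hc]
  · intro c _ c' _ h
    exact Subtype.ext h
  · rintro ⟨s, F⟩ h
    simp only [Finset.mem_sigma, Finset.mem_powersetCard, Finset.mem_filter, Finset.mem_univ,
      true_and] at h
    exact ⟨⟨⟨s, F⟩, h.1.2, h.2.1⟩, by simpa using h.2.2, rfl⟩

theorem rb_aux_two {T : Type} [Fintype T] (q : ℕ) (x y : T) (h : x ≠ y) :
    (Finset.univ.filter fun F : Finset T => F.card = q ∧ x ∉ F ∧ y ∉ F).card
      = (Fintype.card T - 2).choose q := by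
  have : (Finset.univ.filter fun F : Finset T => F.card = q ∧ x ∉ F ∧ y ∉ F)
      = Finset.powersetCard q (({x, y} : Finset T)ᶜ) := by
    ext F
    simp only [Finset.mem_filter, Finset.mem_univ, true_and, Finset.mem_powersetCard]
    rw [Finset.subset_compl_comm, Finset.insert_subset_iff, Finset.singleton_subset_iff]
    simp [and_comm]
  rw [this, Finset.card_powersetCard, Finset.card_compl, Finset.card_pair h]

theorem rb_aux_one {T : Type} [Fintype T] (q : ℕ) (x : T) :
    (Finset.univ.filter fun F : Finset T => F.card = q ∧ x ∉ F).card
      = (Fintype.card T - 1).choose q := by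
  have : (Finset.univ.filter fun F : Finset T => F.card = q ∧ x ∉ F)
      = Finset.powersetCard q (({x} : Finset T)ᶜ) := by
    ext F
    simp only [Finset.mem_filter, Finset.mem_univ, true_and, Finset.mem_powersetCard]
    rw [Finset.subset_compl_comm, Finset.singleton_subset_iff]
    simp [and_comm]
  rw [this, Finset.card_powersetCard, Finset.card_compl, Finset.card_singleton]

/-- **Probability that an assignment satisfies a single forced random RB constraint**:
consider a random constraint over `n` variables (`k ≤ n`) with common domain of size `d`,
forced to allow the fixed total assignment `t`: its scope is a uniformly random set of `k`
distinct variables and its forbidden set a uniformly random set of exactly `q ≤ d^k - 1`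
tuples excluding the tuple induced by `t` (equivalently, the uniform distribution over
constraints satisfied by `t`). If the total assignment `t'` agrees with `t` on exactly
`a` variables then, with `ρ = C(a,k)/C(n,k)`, the probability that `t'` satisfies the
constraint equals `ρ + (1-ρ)·(1 - q/(d^k - 1))`. -/
theorem rb_forced_constraint_probability (k n d q a : ℕ) (hkn : k ≤ n) (hq : q < d ^ k)
    (t t' : Fin n → Fin d)
    (ha : (Finset.univ.filter fun i : Fin n => t i = t' i).card = a) :
    ((Finset.univ.filter fun c : RB.ValidConstraint k n d q =>
        RB.satisfies t c.1 ∧ RB.satisfies t' c.1).card : ℝ)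
      / ((Finset.univ.filter fun c : RB.ValidConstraint k n d q =>
          RB.satisfies t c.1).card : ℝ)
    = (a.choose k : ℝ) / (n.choose k)
      + (1 - (a.choose k : ℝ) / (n.choose k)) * (1 - (q : ℝ) / ((d : ℝ) ^ k - 1)) := by
  have hden : (Finset.univ.filter fun c : RB.ValidConstraint k n d q =>
          RB.satisfies t c.1).card = n.choose k * (d ^ k - 1).choose q := by
    rw [rb_aux_count k n d q (fun c => RB.satisfies t c)]
    rw [Finset.sum_congr rfl (g := fun _ => (d ^ k - 1).choose q)]
    · simp
    · intro s hs
      have hs' := (Finset.mem_powersetCard.1 hs).2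
      have := rb_aux_one q (fun i : ↥s => t i.1)
      rw [Fintype.card_fun, Fintype.card_coe, Fintype.card_fin, hs'] at this
      convert this
  have hnum : ((Finset.univ.filter fun c : RB.ValidConstraint k n d q =>
        RB.satisfies t c.1 ∧ RB.satisfies t' c.1).card : ℝ)
      = a.choose k * ((d ^ k - 1).choose q : ℕ)
        + ((n.choose k : ℝ) - a.choose k) * ((d ^ k - 2).choose q : ℕ) := by
    rw [rb_aux_count k n d q (fun c => RB.satisfies t c ∧ RB.satisfies t' c)]
    set A := Finset.univ.filter fun i : Fin n => t i = t' i with hA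
    rw [Finset.sum_congr rfl (g := fun s => if s ⊆ A then (d ^ k - 1).choose q
      else (d ^ k - 2).choose q)]
    · rw [Finset.sum_ite, Finset.sum_const, Finset.sum_const]
      have h1 : ((Finset.powersetCard k (Finset.univ : Finset (Fin n))).filter
          (fun s => s ⊆ A)).card = a.choose k := by
        rw [← ha, ← Finset.card_powersetCard]
        congr 1
        ext s
        simp [Finset.mem_powersetCard, and_comm]
      have h2 := Finset.card_filter_add_card_filter_not
        (s := Finset.powersetCard k (Finset.univ : Finset (Fin n))) (fun s => s ⊆ A)
      rw [h1, Finset.card_powersetCard, Finset.card_univ, Fintype.card_fin] at h2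
      rw [h1, ← h2]
      push_cast
      simp
    · intro s hs
      have hs' := (Finset.mem_powersetCard.1 hs).2
      split_ifs with hsA
      · have := rb_aux_one q (fun i : ↥s => t i.1)
        rw [Fintype.card_fun, Fintype.card_coe, Fintype.card_fin, hs'] at this
        have e : (fun i : ↥s => t' i.1) = (fun i : ↥s => t i.1) := by
          funext i
          have := hsA i.2
          rw [hA, Finset.mem_filter] at this
          exact this.2.symm
        rw [← this]
        simp only [RB.satisfies, e, and_self]
        congr
      · have hne : (fun i : ↥s => t i.1) ≠ (fun i : ↥s => t' i.1) := by
          intro e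
          apply hsA
          intro i hi
          rw [hA, Finset.mem_filter]
          exact ⟨Finset.mem_univ _, congrFun e ⟨i, hi⟩⟩
        have := rb_aux_two q _ _ hne
        rw [Fintype.card_fun, Fintype.card_coe, Fintype.card_fin, hs'] at this
        convert this
  rw [hnum, hden]
  have hC : (n.choose k : ℝ) ≠ 0 := by
    exact_mod_cast (Nat.choose_pos hkn).ne'
  have hB : ((d ^ k - 1).choose q : ℝ) ≠ 0 := by
    exact_mod_cast (Nat.choose_pos (by omega)).ne'
  push_cast
  rcases Nat.eq_zero_or_pos q with rfl | hq0
  · simp [hC]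
  · obtain ⟨M, hM⟩ : ∃ M, d ^ k = M + 2 := ⟨d ^ k - 2, by omega⟩
    have hr : (d : ℝ) ^ k = M + 2 := by exact_mod_cast hM
    rw [hM] at hB hq ⊢
    rw [hr]
    have h := Nat.choose_mul_succ_eq M q
    have h' : (M.choose q : ℝ) * (M + 1) = ((M + 1).choose q : ℝ) * (M + 1 - q) := by
      have : ((M + 1 - q : ℕ) : ℝ) = M + 1 - q := by
        rw [Nat.cast_sub (by omega)]; push_cast; ring
      rw [← this]; exact_mod_cast h
    have e1 : M + 2 - 1 = M + 1 := by omega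
    have e2 : M + 2 - 2 = M := by omega
    rw [e1] at hB ⊢
    rw [e2]
    have hM1 : (M : ℝ) + 1 ≠ 0 := by positivity
    have h3 : (M.choose q : ℝ) = ((M + 1).choose q : ℝ) * (M + 1 - q) / (M + 1) := by
      rw [eq_div_iff hM1]; exact h'
    rw [h3, show (M : ℝ) + 2 - 1 = M + 1 by ring]
    field_simp
end

section
/- Fix an integer k ≥ 2 and reals α > 0, r > 0, 0 < p < 1 and δ ∈ (0,1]. For n ≥ k define B(n) = C(n - ⌊δn⌋, k)/C(n,k) (with C(a,k) = 0 if a < k) and F(n) = C(n, ⌊δn⌋) · (n^α - 1)^{⌊δn⌋} · [B(n) + (1-p)·(1 - B(n))]^{r·n·ln n}. Then ln F(n) = n·ln n·(r·ln(1 - p + p·(1-δ)^k) + α·δ) + O(n) as n → ∞. -/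
open Filter Asymptotics

/-- `B(n) = C(n - ⌊δn⌋, k) / C(n,k)`, the probability that a random scope of `k`
variables lies inside the agreement set of two assignments at relative distance `δ`. -/
noncomputable def B (k : ℕ) (δ : ℝ) (n : ℕ) : ℝ :=
  (((n - ⌊δ * (n : ℝ)⌋₊).choose k : ℝ)) / ((n.choose k : ℝ))

/-- `F(n) = C(n,⌊δn⌋) · (n^α - 1)^⌊δn⌋ · [B(n) + (1-p)·(1 - B(n))]^(r·n·ln n)`, the
expected number of solutions at relative Hamming distance `δ` from the forced solution
of a forced random `RB(k,n,α,r,p)` instance. -/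
noncomputable def F (k : ℕ) (α r p δ : ℝ) (n : ℕ) : ℝ :=
  ((n.choose ⌊δ * (n : ℝ)⌋₊ : ℝ)) * ((n : ℝ) ^ α - 1) ^ (⌊δ * (n : ℝ)⌋₊) *
    (B k δ n + (1 - p) * (1 - B k δ n)) ^ (r * n * Real.log n)

lemma aux_factor (δ : ℝ) (hδ0 : 0 < δ) (hδ1 : δ ≤ 1) (i : ℕ) :
    (fun n : ℕ => (((n - ⌊δ * (n : ℝ)⌋₊ - i : ℕ) : ℝ)) / ((n - i : ℕ) : ℝ) - (1 - δ))
      =O[atTop] (fun n : ℕ => 1 / (n : ℝ)) := by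
  refine IsBigO.of_bound (4 * i + 2) ?_
  filter_upwards [eventually_ge_atTop (2 * i + 1)] with n hn
  have hnR : (2 * i + 1 : ℝ) ≤ n := by exact_mod_cast hn
  have hi0 : (0 : ℝ) ≤ i := Nat.cast_nonneg i
  have hn0 : (0 : ℝ) < n := by linarith
  have h1 : ((n - i : ℕ) : ℝ) = (n : ℝ) - i := Nat.cast_sub (by omega)
  have hN1 := Nat.floor_le (show 0 ≤ δ * (n : ℝ) by positivity)
  have hN2 := Nat.lt_floor_add_one (δ * (n : ℝ))
  set N := ⌊δ * (n : ℝ)⌋₊ with hN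
  have hNn : (N : ℝ) ≤ n := hN1.trans (by nlinarith)
  have hNn' : N ≤ n := by exact_mod_cast hNn
  have h2 : (n : ℝ) - N - i ≤ ((n - N - i : ℕ) : ℝ) := by
    have : n ≤ (n - N - i) + N + i := by omega
    have : (n : ℝ) ≤ ((n - N - i : ℕ) : ℝ) + N + i := by exact_mod_cast this
    linarith
  have h3 : ((n - N - i : ℕ) : ℝ) ≤ (n : ℝ) - N := by
    have : (n - N - i) + N ≤ n := by omega
    have : ((n - N - i : ℕ) : ℝ) + N ≤ n := by exact_mod_cast this
    linarith
  have hd : (0 : ℝ) < n - i := by linarith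
  have hδi : δ * i ≤ i := by nlinarith
  have hδi0 : 0 ≤ δ * i := by positivity
  rw [h1, div_sub' hd.ne', norm_div, Real.norm_eq_abs, Real.norm_eq_abs, abs_of_pos hd,
    Real.norm_eq_abs, abs_of_pos (by positivity : 0 < 1 / (n : ℝ)), mul_one_div,
    div_le_div_iff₀ hd hn0]
  have h4 : |((n - N - i : ℕ) : ℝ) - (n - i) * (1 - δ)| ≤ 2 * i + 1 := by
    rw [abs_le]
    constructor <;> nlinarith
  calc _ ≤ (2 * i + 1) * (n : ℝ) := by gcongr
    _ ≤ _ := by nlinarith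

lemma aux_prod (δ : ℝ) (hδ0 : 0 < δ) (hδ1 : δ ≤ 1) (k : ℕ) :
    (fun n : ℕ => ((n - ⌊δ * (n : ℝ)⌋₊).descFactorial k : ℝ) / (n.descFactorial k : ℝ)
      - (1 - δ) ^ k) =O[atTop] (fun n : ℕ => 1 / (n : ℝ)) := by
  induction k with
  | zero => simpa using isBigO_zero _ _
  | succ k ih =>
    have hf := aux_factor δ hδ0 hδ1 k
    have ho : (fun n : ℕ => 1 / (n : ℝ)) =O[atTop] (fun _ => (1 : ℝ)) :=
      (tendsto_one_div_atTop_nhds_zero_nat).isBigO_one ℝ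
    have hb : (fun n : ℕ => (((n - ⌊δ * (n : ℝ)⌋₊ - k : ℕ) : ℝ)) / ((n - k : ℕ) : ℝ))
        =O[atTop] (fun _ => (1 : ℝ)) := by
      have := (hf.trans ho).add (isBigO_const_const (1 - δ) (one_ne_zero (α := ℝ)) atTop)
      simpa using this
    have h1 := ih.mul hb
    have h2 := hf.const_mul_left ((1 - δ) ^ k)
    simp only [mul_one] at h1
    refine (h1.add h2).congr_left fun n => ?_
    rw [Nat.descFactorial_succ, Nat.descFactorial_succ]
    push_cast
    rw [mul_div_mul_comm]
    ring

lemma aux_B (δ : ℝ) (hδ0 : 0 < δ) (hδ1 : δ ≤ 1) (k : ℕ) :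
    (fun n : ℕ => B k δ n - (1 - δ) ^ k) =O[atTop] (fun n : ℕ => 1 / (n : ℝ)) := by
  refine (aux_prod δ hδ0 hδ1 k).congr_left fun n => ?_
  rw [Nat.descFactorial_eq_factorial_mul_choose, Nat.descFactorial_eq_factorial_mul_choose, B]
  push_cast
  rw [mul_div_mul_left _ _ (by positivity)]

lemma aux_log (c x y : ℝ) (hc : 0 < c) (hx : c ≤ x) (hy : c ≤ y) :
    |Real.log x - Real.log y| ≤ |x - y| / c := by
  have key : ∀ x y : ℝ, c ≤ x → c ≤ y → Real.log x - Real.log y ≤ |x - y| / c := by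
    intro x y hx hy
    have hx0 := hc.trans_le hx
    have hy0 := hc.trans_le hy
    rw [← Real.log_div hx0.ne' hy0.ne']
    calc _ ≤ x / y - 1 := Real.log_le_sub_one_of_pos (by positivity)
      _ = (x - y) / y := by field_simp
      _ ≤ |x - y| / y := by gcongr; exact le_abs_self _
      _ ≤ |x - y| / c := by gcongr
  rw [abs_le]
  have h1 := key x y hx hy
  have h2 := key y x hy hx
  rw [abs_sub_comm] at h2
  constructor <;> linarith

/-- **Asymptotics of the expected number of solutions at distance `δ` from the forced
solution**: for an integer `k ≥ 2` and reals `α > 0`, `r > 0`, `0 < p < 1`, `δ ∈ (0,1]`,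
`ln F(n) = n·ln n·(r·ln(1 - p + p·(1-δ)^k) + α·δ) + O(n)` as `n → ∞`. -/
theorem rb_forced_distance_asymptotics (k : ℕ) (hk : 2 ≤ k) (α r p δ : ℝ)
    (hα : 0 < α) (hr : 0 < r) (hp0 : 0 < p) (hp1 : p < 1) (hδ0 : 0 < δ) (hδ1 : δ ≤ 1) :
    (fun n : ℕ => Real.log (F k α r p δ n)
        - (n : ℝ) * Real.log n * (r * Real.log (1 - p + p * (1 - δ) ^ k) + α * δ))
      =O[atTop] (fun n : ℕ => (n : ℝ)) := by
  obtain ⟨C, hC⟩ := (aux_B δ hδ0 hδ1 k).bound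
  have hlarge : ∀ᶠ n : ℕ in atTop, (2 : ℝ) ≤ (n : ℝ) ^ α :=
    ((tendsto_rpow_atTop hα).comp tendsto_natCast_atTop_atTop).eventually_ge_atTop 2
  refine IsBigO.of_bound (Real.log 2 + Real.log 2 + α + r * (p * C / (1 - p))) ?_
  filter_upwards [hC, hlarge, eventually_ge_atTop 1] with n hCn hl hn
  have hn0 : (0 : ℝ) < n := by exact_mod_cast hn
  have hn1 : (1 : ℝ) ≤ n := by exact_mod_cast hn
  have hL0 : 0 ≤ Real.log n := Real.log_nonneg hn1
  have hLn : Real.log n ≤ n := by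
    have := Real.log_le_sub_one_of_pos hn0
    linarith
  have hB0 : 0 ≤ B k δ n := by unfold B; positivity
  have hq : B k δ n + (1 - p) * (1 - B k δ n) = 1 - p + p * B k δ n := by ring
  have hN1 := Nat.floor_le (show 0 ≤ δ * (n : ℝ) by positivity)
  have hN2 := Nat.lt_floor_add_one (δ * (n : ℝ))
  unfold F
  rw [hq]
  set N := ⌊δ * (n : ℝ)⌋₊ with hN
  have hNn : (N : ℝ) ≤ n := hN1.trans (by nlinarith)
  have hNn' : N ≤ n := by exact_mod_cast hNn
  have hch : 1 ≤ n.choose N := Nat.choose_pos hNn'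
  have hchR : (1 : ℝ) ≤ n.choose N := by exact_mod_cast hch
  have hch2 : (n.choose N : ℝ) ≤ 2 ^ n := by exact_mod_cast Nat.choose_le_two_pow n N
  have hQ : 1 - p ≤ 1 - p + p * B k δ n := by nlinarith
  have hb : 1 - p ≤ 1 - p + p * (1 - δ) ^ k := by
    have : 0 ≤ (1 - δ) ^ k := pow_nonneg (by linarith) k
    nlinarith
  have hp : 0 < 1 - p := by linarith
  have hQ0 := hp.trans_le hQ
  have hA0 : 0 < (n : ℝ) ^ α - 1 := by linarith
  rw [Real.log_mul (by positivity) (by positivity), Real.log_mul (by positivity) (by positivity),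
    Real.log_pow, Real.log_rpow hQ0]
  have hlog := aux_log _ _ _ hp hQ hb
  set Q := Real.log (1 - p + p * B k δ n)
  set b := Real.log (1 - p + p * (1 - δ) ^ k)
  have e1 : |Real.log (n.choose N)| ≤ Real.log 2 * n := by
    rw [abs_of_nonneg (Real.log_nonneg hchR)]
    calc _ ≤ Real.log (2 ^ n) := Real.log_le_log (by linarith) hch2
      _ = _ := by rw [Real.log_pow]; ring
  have e2' : |Real.log ((n : ℝ) ^ α - 1) - α * Real.log n| ≤ Real.log 2 := by
    rw [← Real.log_rpow hn0]
    have h1 : Real.log ((n : ℝ) ^ α - 1) ≤ Real.log ((n : ℝ) ^ α) :=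
      Real.log_le_log hA0 (by linarith)
    have h2 : Real.log ((n : ℝ) ^ α / 2) ≤ Real.log ((n : ℝ) ^ α - 1) :=
      Real.log_le_log (by linarith) (by linarith)
    rw [Real.log_div (by positivity) (by norm_num)] at h2
    have := Real.log_nonneg (one_le_two (α := ℝ))
    rw [abs_le]; constructor <;> linarith
  have e2 : |(N : ℝ) * (Real.log ((n : ℝ) ^ α - 1) - α * Real.log n)| ≤ Real.log 2 * n := by
    rw [abs_mul, Nat.abs_cast, mul_comm]
    gcongr
  have e3 : |α * Real.log n * (N - δ * n)| ≤ α * n := by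
    rw [abs_mul, abs_of_nonneg (by positivity)]
    have : |(N : ℝ) - δ * n| ≤ 1 := by rw [abs_le]; constructor <;> linarith
    calc _ ≤ α * Real.log n * 1 := by gcongr
      _ ≤ _ := by rw [mul_one]; gcongr
  have e4 : |r * n * Real.log n * (Q - b)| ≤ r * (p * C / (1 - p)) * n := by
    rw [abs_mul, abs_of_nonneg (by positivity : 0 ≤ r * n * Real.log n)]
    rw [Real.norm_eq_abs, Real.norm_eq_abs, abs_of_pos (by positivity : 0 < 1 / (n : ℝ))] at hCn
    have hC0 : 0 ≤ C := by
      have := (abs_nonneg _).trans hCn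
      exact nonneg_of_mul_nonneg_left this (by positivity)
    have h1 : |Q - b| ≤ p * (C * (1 / n)) / (1 - p) := by
      refine hlog.trans ?_
      have : (1 - p + p * B k δ n) - (1 - p + p * (1 - δ) ^ k) = p * (B k δ n - (1 - δ) ^ k) := by
        ring
      rw [this, abs_mul, abs_of_pos hp0]
      gcongr
    calc _ ≤ r * n * Real.log n * (p * (C * (1 / n)) / (1 - p)) := by gcongr
      _ = r * (p * C / (1 - p)) * Real.log n := by field_simp
      _ ≤ _ := by gcongr
  have e : Real.log (n.choose N) + N * Real.log ((n : ℝ) ^ α - 1) + r * n * Real.log n * Q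
      - n * Real.log n * (r * b + α * δ)
      = Real.log (n.choose N) + (N : ℝ) * (Real.log ((n : ℝ) ^ α - 1) - α * Real.log n)
        + α * Real.log n * (N - δ * n) + r * n * Real.log n * (Q - b) := by ring
  rw [e, Real.norm_eq_abs, Real.norm_eq_abs, abs_of_pos hn0]
  rw [abs_le] at *
  constructor <;> linarith [e1.1, e1.2, e2.1, e2.2, e3.1, e3.2, e4.1, e4.2]
end

section
/- Let k ≥ 2 be an integer and let α > 0, r > 0 and p be reals with 0 < p ≤ (k-1)/k and α + r·ln(1-p) > 0 (i.e., r < r_cr = -α/ln(1-p)). Define f : [0,1] → ℝ by f(δ) = r·ln(1 - p + p·(1-δ)^k) + α·δ. Then f(δ) < f(1) for every δ ∈ [0,1); that is, f attains its maximum on [0,1] uniquely at δ = 1. -/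
/-- **Solutions of forced RB instances lie far from the forced solution**: let `k ≥ 2`
be an integer and `α > 0`, `r > 0`, `0 < p ≤ (k-1)/k` reals with `α + r·ln(1-p) > 0`
(i.e. `r < r_cr = -α/ln(1-p)`). Then the exponential growth rate
`f(δ) = r·ln(1 - p + p·(1-δ)^k) + α·δ` of the expected number of solutions at relative
Hamming distance `δ` from the forced solution satisfies `f(δ) < f(1)` for every
`δ ∈ [0,1)`; that is, `f` attains its maximum on `[0,1]` uniquely at `δ = 1`
(note `f(1) = r·ln(1-p) + α`). -/
theorem rb_forced_growth_rate_maximized_at_one (k : ℕ) (hk : 2 ≤ k) (α r p : ℝ)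
    (hα : 0 < α) (hr : 0 < r) (hp0 : 0 < p) (hp1 : p ≤ ((k : ℝ) - 1) / k)
    (hcond : 0 < α + r * Real.log (1 - p)) :
    ∀ δ : ℝ, 0 ≤ δ → δ < 1 →
      r * Real.log (1 - p + p * (1 - δ) ^ k) + α * δ < r * Real.log (1 - p) + α := by
  intro δ hδ0 hδ1
  obtain ⟨n, rfl⟩ : ∃ n, k = n + 2 := ⟨k - 2, by omega⟩
  push_cast at hp1
  have hn : (0 : ℝ) ≤ n := Nat.cast_nonneg n
  have hp2 : p * (n + 2) ≤ n + 1 := by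
    rw [le_div_iff₀ (by positivity)] at hp1
    linarith
  have hq : 0 < 1 - p := by
    by_contra h
    nlinarith
  have hD : ∀ x : ℝ, 0 ≤ x → 0 < 1 - p + p * x ^ (n + 2) := fun x hx => by positivity
  have hconv : ConvexOn ℝ (Set.Icc (0 : ℝ) 1)
      (fun x => Real.log (1 - p + p * x ^ (n + 2))) := by
    have hd : ∀ x : ℝ, HasDerivAt (fun x : ℝ => 1 - p + p * x ^ (n + 2))
        (p * ((n + 2) * x ^ (n + 1))) x := fun x => by
      have := ((hasDerivAt_pow (n + 2) x).const_mul p).const_add (1 - p)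
      simpa using this
    have hd2 : ∀ x : ℝ, HasDerivAt (fun x : ℝ => p * ((n + 2) * x ^ (n + 1)))
        (p * ((n + 2) * ((n + 1) * x ^ n))) x := fun x => by
      have := ((hasDerivAt_pow (n + 1) x).const_mul ((n : ℝ) + 2)).const_mul p
      simpa using this
    refine convexOn_of_hasDerivWithinAt2_nonneg (convex_Icc 0 1)
      (f' := fun x => p * ((n + 2) * x ^ (n + 1)) / (1 - p + p * x ^ (n + 2)))
      (f'' := fun x => (p * ((n + 2) * ((n + 1) * x ^ n)) * (1 - p + p * x ^ (n + 2))
        - p * ((n + 2) * x ^ (n + 1)) * (p * ((n + 2) * x ^ (n + 1))))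
          / (1 - p + p * x ^ (n + 2)) ^ 2) ?_ ?_ ?_ ?_
    · intro x hx
      exact ((hd x).log (hD x hx.1).ne').continuousAt.continuousWithinAt
    · intro x hx
      rw [interior_Icc] at hx
      exact ((hd x).log (hD x hx.1.le).ne').hasDerivWithinAt
    · intro x hx
      rw [interior_Icc] at hx
      exact ((hd2 x).div (hd x) (hD x hx.1.le).ne').hasDerivWithinAt
    · intro x hx
      rw [interior_Icc] at hx
      have hx0 := hx.1.le
      have h1 : x ^ (n + 2) ≤ 1 := pow_le_one₀ hx0 hx.2.le
      apply div_nonneg _ (sq_nonneg _)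
      have e : p * ((n + 2) * ((n + 1) * x ^ n)) * (1 - p + p * x ^ (n + 2))
        - p * ((n + 2) * x ^ (n + 1)) * (p * ((n + 2) * x ^ (n + 1)))
        = p * (n + 2) * x ^ n * ((n + 1) * (1 - p) - p * x ^ (n + 2)) := by ring
      rw [e]
      have : 0 ≤ (n + 1) * (1 - p) - p * x ^ (n + 2) := by nlinarith
      positivity
  have key := hconv.2 (x := 0) (y := 1) (by simp) (by simp) hδ0
    (sub_nonneg.2 hδ1.le) (by ring)
  simp at key
  nlinarith [mul_le_mul_of_nonneg_left key hr.le, mul_pos hcond (sub_pos.2 hδ1)]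
end
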